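/- arXiv:1608.05449 — 2 statements merged into one kernel-verified Lean document; each statement's English description precedes it below -/
import Mathlib

section
/- There is an absolute constant c > 0 such that for every sufficiently small η > 0 and every sufficiently large T (depending on η), the number of primes p ≤ T for which p − 1 has a prime divisor q lying in the interval [T^(1/2−η), T^(1/2−η/2)] is greater than c·η·T/log T. -/
/-!
Put `S = √T` and count `Λ n` over the `n ≤ T` with `n ≡ 1 [MOD q]`, for the primes `q` of a window
just below `S`. An `n` with `1 < n ≤ T` lies in this progression for at most two such `q`, as a
product of three of them exceeds `T`, so the number of primes detected is at least a constant times
`(T / log T) ∑ 1 / q`, provided that the counts have their expected size on average over `q`. The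
sum of the `1 / q` is at least a constant times `η` by a weak form of Mertens' theorem.

For the average over `q`, Vaughan's identity splits `Λ` into Type I sums, in which a long smooth
variable is evenly distributed modulo `q`, and bilinear Type II sums. As `q` is prime, the variance
over the residue classes of the sums of a sequence is controlled by the values of its trigonometric
polynomial at the fractions `b / q` with `0 < b < q`, and Cauchy–Schwarz together with the additive
large sieve bounds the Type II sums.
-/

section LargeSieve

open Finset InnerProductSpace
open scoped FourierTransform

lemma norm_sum_smul_sq_le {𝕜 E ι : Type*} [RCLike 𝕜] [SeminormedAddCommGroup E]
    [InnerProductSpace 𝕜 E] (R : Finset ι) (φ : ι → E) {Δ : ℝ}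
    (hΔ : ∀ r ∈ R, ∑ s ∈ R, ‖inner 𝕜 (φ r) (φ s)‖ ≤ Δ) (c : ι → 𝕜) :
    ‖∑ r ∈ R, c r • φ r‖ ^ 2 ≤ Δ * ∑ r ∈ R, ‖c r‖ ^ 2 := by
  have expand : ‖∑ r ∈ R, c r • φ r‖ ^ 2
      ≤ ∑ r ∈ R, ∑ s ∈ R, ‖c r‖ * ‖c s‖ * ‖inner 𝕜 (φ r) (φ s)‖ := by
    rw [@norm_sq_eq_re_inner 𝕜, sum_inner]
    refine (RCLike.re_le_norm _).trans <| (norm_sum_le _ _).trans (sum_le_sum fun r _ ↦ ?_)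
    rw [inner_sum]
    refine (norm_sum_le _ _).trans_eq (sum_congr rfl fun s _ ↦ ?_)
    rw [inner_smul_left, inner_smul_right, norm_mul, norm_mul, RCLike.norm_conj, mul_assoc]
  calc ‖∑ r ∈ R, c r • φ r‖ ^ 2
      ≤ ∑ r ∈ R, ∑ s ∈ R, ‖c r‖ * ‖c s‖ * ‖inner 𝕜 (φ r) (φ s)‖ := expand
    _ ≤ ∑ r ∈ R, ∑ s ∈ R, (‖c r‖ ^ 2 / 2 * ‖inner 𝕜 (φ r) (φ s)‖
          + ‖c s‖ ^ 2 / 2 * ‖inner 𝕜 (φ s) (φ r)‖) := by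
        refine sum_le_sum fun r _ ↦ sum_le_sum fun s _ ↦ ?_
        rw [norm_inner_symm (φ s), ← add_mul]
        gcongr
        linarith [two_mul_le_add_sq ‖c r‖ ‖c s‖]
    _ = ∑ r ∈ R, ‖c r‖ ^ 2 * ∑ s ∈ R, ‖inner 𝕜 (φ r) (φ s)‖ := by
        simp only [sum_add_distrib]
        rw [sum_comm (f := fun r s ↦ ‖c s‖ ^ 2 / 2 * ‖inner 𝕜 (φ s) (φ r)‖), ← sum_add_distrib]
        simp only [← mul_sum, ← add_mul, add_halves]
    _ ≤ Δ * ∑ r ∈ R, ‖c r‖ ^ 2 := by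
        rw [mul_sum]
        refine sum_le_sum fun r hr ↦ ?_
        rw [mul_comm Δ]
        gcongr
        exact hΔ r hr

/- Bombieri's inequality: the adjoint of `c ↦ ∑ c r • φ r` has the same norm as the map itself. -/
theorem sum_norm_inner_sq_le {𝕜 E ι : Type*} [RCLike 𝕜] [SeminormedAddCommGroup E]
    [InnerProductSpace 𝕜 E] (R : Finset ι) (φ : ι → E) {Δ : ℝ} (hΔ₀ : 0 ≤ Δ)
    (hΔ : ∀ r ∈ R, ∑ s ∈ R, ‖inner 𝕜 (φ r) (φ s)‖ ≤ Δ) (v : E) :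
    ∑ r ∈ R, ‖inner 𝕜 (φ r) v‖ ^ 2 ≤ Δ * ‖v‖ ^ 2 := by
  set B := ∑ r ∈ R, ‖inner 𝕜 (φ r) v‖ ^ 2 with hB
  set w := ∑ r ∈ R, inner 𝕜 (φ r) v • φ r with hw
  have inner_w : inner 𝕜 w v = (B : 𝕜) := by
    simp only [hw, hB, sum_inner, inner_smul_left, RCLike.conj_mul]
    push_cast
    rfl
  have B_nonneg : 0 ≤ B := sum_nonneg fun _ _ ↦ sq_nonneg _
  have B_le : B ≤ ‖w‖ * ‖v‖ := by
    have := norm_inner_le_norm (𝕜 := 𝕜) w v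
    rwa [inner_w, RCLike.norm_of_nonneg B_nonneg] at this
  have w_le : ‖w‖ ^ 2 ≤ Δ * B := norm_sum_smul_sq_le R φ hΔ _
  rcases B_nonneg.eq_or_lt with hB₀ | hB₀
  · rw [← hB₀]; positivity
  refine le_of_mul_le_mul_left ?_ hB₀
  calc B * B ≤ (‖w‖ * ‖v‖) * (‖w‖ * ‖v‖) := by gcongr
    _ = ‖w‖ ^ 2 * ‖v‖ ^ 2 := by ring
    _ ≤ Δ * B * ‖v‖ ^ 2 := by gcongr
    _ = B * (Δ * ‖v‖ ^ 2) := by ring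

/-- The trigonometric polynomial with frequencies in `s` and coefficients `a`, written for a real
argument modulo one. -/
noncomputable def trigSum (s : Finset ℕ) (a : ℕ → ℂ) (x : ℝ) : ℂ :=
  ∑ n ∈ s, a n * 𝐞 (n * x)

lemma fourierChar_natCast_mul (n : ℕ) (t : ℝ) : (𝐞 (n * t) : ℂ) = (𝐞 t : ℂ) ^ n := by
  rw [← nsmul_eq_mul, AddChar.map_nsmul_eq_pow, Circle.coe_pow]

lemma fourierChar_intCast (k : ℤ) : 𝐞 (k : ℝ) = 1 :=
  Circle.ext <| by
    rw [Real.fourierChar_apply, Circle.coe_one, Complex.exp_eq_one_iff]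
    exact ⟨k, by push_cast; ring⟩

lemma four_mul_norm_le_norm_fourierChar_sub_one (t : ℝ) :
    4 * ‖(t : UnitAddCircle)‖ ≤ ‖(𝐞 t : ℂ) - 1‖ := by
  set u := t - round t with hu
  have abs_u : |u| ≤ 1 / 2 := abs_sub_round t
  have fourierChar_u : 𝐞 t = 𝐞 u := by
    rw [hu, AddChar.map_sub_eq_div, fourierChar_intCast, div_one]
  have norm_eq : ‖(𝐞 u : ℂ) - 1‖ = 2 * |Real.sin (Real.pi * u)| := by
    have : (𝐞 u : ℂ) = Complex.exp (Complex.I * (2 * Real.pi * u : ℝ)) := by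
      rw [Real.fourierChar_apply, mul_comm]
    rw [this, Complex.norm_exp_I_mul_ofReal_sub_one, norm_mul, Real.norm_ofNat, Real.norm_eq_abs]
    ring_nf
  have le_sin : 2 / Real.pi * |Real.pi * u| ≤ |Real.sin (Real.pi * u)| := by
    apply Real.mul_abs_le_abs_sin
    rw [abs_mul, abs_of_pos Real.pi_pos]
    nlinarith [Real.pi_pos]
  rw [abs_mul, abs_of_pos Real.pi_pos, ← mul_assoc, div_mul_cancel₀ _ Real.pi_ne_zero] at le_sin
  rw [UnitAddCircle.norm_eq, ← hu, fourierChar_u, norm_eq]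
  linarith

lemma norm_sum_range_fourierChar_le (N : ℕ) {t : ℝ} (ht : 0 < ‖(t : UnitAddCircle)‖) :
    ‖∑ n ∈ range N, (𝐞 (n * t) : ℂ)‖ ≤ (2 * ‖(t : UnitAddCircle)‖)⁻¹ := by
  have denom := four_mul_norm_le_norm_fourierChar_sub_one t
  have ne_one : (𝐞 t : ℂ) ≠ 1 := fun h ↦ by
    rw [h, sub_self, norm_zero] at denom
    linarith
  simp only [fourierChar_natCast_mul]
  rw [geom_sum_eq ne_one, norm_div]
  calc ‖(𝐞 t : ℂ) ^ N - 1‖ / ‖(𝐞 t : ℂ) - 1‖ ≤ 2 / (4 * ‖(t : UnitAddCircle)‖) := by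
        gcongr
        refine (norm_sub_le _ _).trans_eq ?_
        rw [norm_pow, Circle.norm_coe, one_pow, norm_one, one_add_one_eq_two]
    _ = (2 * ‖(t : UnitAddCircle)‖)⁻¹ := by field_simp; norm_num

lemma inv_norm_le_inv_fract_add_inv_fract_neg (t : ℝ) :
    ‖(t : UnitAddCircle)‖⁻¹ ≤ (Int.fract t)⁻¹ + (Int.fract (-t))⁻¹ := by
  have h := inv_nonneg.2 (Int.fract_nonneg t)
  have h' := inv_nonneg.2 (Int.fract_nonneg (-t))
  rw [UnitAddCircle.norm_eq, abs_sub_round_eq_min]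
  rcases eq_or_ne (Int.fract t) 0 with h₀ | h₀
  · rw [h₀, sub_zero, min_eq_left zero_le_one, inv_zero, zero_add]
    exact h'
  rw [← Int.fract_neg h₀]
  rcases min_choice (Int.fract t) (Int.fract (-t)) with hm | hm <;> rw [hm] <;> linarith

lemma sum_inv_le_of_separated {ι : Type*} (R : Finset ι) (f : ι → ℝ) {δ : ℝ} (hδ : 0 < δ)
    (hδ' : δ ≤ 1) (hf : ∀ r ∈ R, δ ≤ f r ∧ f r < 1)
    (hsep : (R : Set ι).Pairwise fun r s ↦ δ ≤ |f r - f s|) :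
    ∑ r ∈ R, (f r)⁻¹ ≤ δ⁻¹ * (1 + Real.log δ⁻¹) := by
  classical
  set k : ι → ℕ := fun r ↦ ⌊f r / δ⌋₊
  have one_le_k : ∀ r ∈ R, 1 ≤ k r := fun r hr ↦ Nat.one_le_floor_iff _ |>.2 <| by
    rw [one_le_div hδ]; exact (hf r hr).1
  have k_le : ∀ r ∈ R, k r ≤ ⌊δ⁻¹⌋₊ := fun r hr ↦ Nat.floor_le_floor <| by
    rw [div_eq_mul_inv]
    exact mul_le_of_le_one_left (inv_nonneg.2 hδ.le) (hf r hr).2.le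
  have k_injOn : Set.InjOn k R := by
    intro r hr s hs hrs
    by_contra hne
    have lt_one : |f r / δ - f s / δ| < 1 := by
      apply Int.abs_sub_lt_one_of_floor_eq_floor
      have nonneg {t : ι} (ht : t ∈ R) : 0 ≤ f t / δ := div_nonneg (hδ.le.trans (hf t ht).1) hδ.le
      rw [← Int.natCast_floor_eq_floor (nonneg hr), ← Int.natCast_floor_eq_floor (nonneg hs)]
      exact congrArg _ hrs
    rw [← sub_div, abs_div, abs_of_pos hδ, div_lt_one hδ] at lt_one
    exact lt_one.not_ge (hsep hr hs hne)
  have inv_le : ∀ r ∈ R, (f r)⁻¹ ≤ δ⁻¹ * (k r : ℝ)⁻¹ := fun r hr ↦ by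
    have k_pos : (0 : ℝ) < k r := by exact_mod_cast one_le_k r hr
    rw [← mul_inv]
    have := Nat.floor_le (div_nonneg (hδ.le.trans (hf r hr).1) hδ.le)
    rw [le_div_iff₀ hδ, mul_comm] at this
    gcongr
  calc ∑ r ∈ R, (f r)⁻¹ ≤ ∑ r ∈ R, δ⁻¹ * (k r : ℝ)⁻¹ := sum_le_sum inv_le
    _ = δ⁻¹ * ∑ n ∈ R.image k, (n : ℝ)⁻¹ := by rw [← mul_sum, sum_image k_injOn]
    _ ≤ δ⁻¹ * ∑ n ∈ Icc 1 ⌊δ⁻¹⌋₊, (n : ℝ)⁻¹ := by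
        gcongr
        exact image_subset_iff.2 fun r hr ↦ mem_Icc.2 ⟨one_le_k r hr, k_le r hr⟩
    _ ≤ δ⁻¹ * (1 + Real.log δ⁻¹) := by
        gcongr
        have := harmonic_floor_le_one_add_log δ⁻¹ ((one_le_inv₀ hδ).2 hδ')
        rw [harmonic_eq_sum_Icc] at this
        push_cast at this
        exact this

lemma sum_inv_fract_sub_le_of_separated {ι : Type*} [DecidableEq ι] (R : Finset ι) (x : ι → ℝ)
    {δ : ℝ} (hδ : 0 < δ) (hδ' : δ ≤ 1)
    (hsep : (R : Set ι).Pairwise fun r s ↦ δ ≤ ‖((x r - x s : ℝ) : UnitAddCircle)‖) {r : ι}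
    (hr : r ∈ R) :
    ∑ s ∈ R.erase r, (Int.fract (x r - x s))⁻¹ ≤ δ⁻¹ * (1 + Real.log δ⁻¹) := by
  have norm_le_fract (t : ℝ) : ‖(t : UnitAddCircle)‖ ≤ Int.fract t := by
    rw [UnitAddCircle.norm_eq, abs_sub_round_eq_min]
    exact min_le_left _ _
  refine sum_inv_le_of_separated _ _ hδ hδ' (fun s hs ↦ ⟨?_, Int.fract_lt_one _⟩) ?_
  · exact (hsep hr (mem_of_mem_erase hs) (ne_of_mem_erase hs).symm).trans (norm_le_fract _)
  · intro s hs t ht hst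
    refine (hsep (mem_of_mem_erase ht) (mem_of_mem_erase hs) hst.symm).trans ?_
    have : x t - x s = (x r - x s) - (x r - x t) := by ring
    rw [this, UnitAddCircle.norm_eq]
    refine (round_le _ (⌊x r - x s⌋ - ⌊x r - x t⌋)).trans_eq ?_
    rw [Int.fract, Int.fract]
    push_cast
    congr 1
    ring

lemma sum_norm_sum_range_fourierChar_le {ι : Type*} (R : Finset ι) (x : ι → ℝ)
    {δ : ℝ} (hδ : 0 < δ) (hδ' : δ ≤ 1)
    (hsep : (R : Set ι).Pairwise fun r s ↦ δ ≤ ‖((x r - x s : ℝ) : UnitAddCircle)‖) (N : ℕ) {r : ι}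
    (hr : r ∈ R) :
    ∑ s ∈ R, ‖∑ n ∈ range N, (𝐞 (n * (x r - x s)) : ℂ)‖ ≤ N + δ⁻¹ * (1 + Real.log δ⁻¹) := by
  classical
  rw [← add_sum_erase _ _ hr]
  have diagonal : ‖∑ n ∈ range N, (𝐞 (n * (x r - x r)) : ℂ)‖ = N := by simp
  have off_diagonal : ∀ s ∈ R.erase r, ‖∑ n ∈ range N, (𝐞 (n * (x r - x s)) : ℂ)‖
      ≤ 2⁻¹ * ((Int.fract (x r - x s))⁻¹ + (Int.fract (-x r - -x s))⁻¹) := fun s hs ↦ by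
    have pos := hδ.trans_le (hsep hr (mem_of_mem_erase hs) (ne_of_mem_erase hs).symm)
    refine (norm_sum_range_fourierChar_le N pos).trans ?_
    rw [mul_inv, neg_sub_neg, ← neg_sub (x r)]
    gcongr
    exact inv_norm_le_inv_fract_add_inv_fract_neg _
  have sum_fract := sum_inv_fract_sub_le_of_separated R x hδ hδ' hsep hr
  have sum_fract_neg := sum_inv_fract_sub_le_of_separated R (fun s ↦ -x s) hδ hδ'
    (fun s hs t ht hst ↦ by simpa only [neg_sub_neg] using hsep ht hs hst.symm) hr
  have := sum_le_sum off_diagonal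
  rw [← mul_sum, sum_add_distrib] at this
  linarith

theorem sum_norm_trigSum_sq_le_of_separated {ι : Type*} (R : Finset ι) (x : ι → ℝ) {δ : ℝ}
    (hδ : 0 < δ) (hδ' : δ ≤ 1)
    (hsep : (R : Set ι).Pairwise fun r s ↦ δ ≤ ‖((x r - x s : ℝ) : UnitAddCircle)‖)
    {N : ℕ} {s : Finset ℕ} (hs : s ⊆ range N) (a : ℕ → ℂ) :
    ∑ r ∈ R, ‖trigSum s a (x r)‖ ^ 2
      ≤ (N + δ⁻¹ * (1 + Real.log δ⁻¹)) * ∑ n ∈ s, ‖a n‖ ^ 2 := by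
  let φ (r : ι) : EuclideanSpace ℂ (Fin N) := WithLp.toLp 2 fun n ↦ (𝐞 (-(n * x r)) : ℂ)
  let v : EuclideanSpace ℂ (Fin N) := WithLp.toLp 2 fun n ↦ if (n : ℕ) ∈ s then a n else 0
  have inner_φ_v (r : ι) : inner ℂ (φ r) v = trigSum s a (x r) := by
    simp only [φ, v, PiLp.inner_apply, RCLike.inner_apply, trigSum]
    rw [Fin.sum_univ_eq_sum_range (fun n ↦ (if n ∈ s then a n else 0) *
      starRingEnd ℂ (𝐞 (-(n * x r)) : ℂ)) N, ← sum_subset hs]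
    · refine sum_congr rfl fun n hn ↦ ?_
      rw [if_pos hn, AddChar.map_neg_eq_inv, Circle.coe_inv_eq_conj, Complex.conj_conj]
    · intro n _ hn
      rw [if_neg hn, zero_mul]
  have inner_φ_φ (r t : ι) : inner ℂ (φ r) (φ t) = ∑ n ∈ range N, (𝐞 (n * (x r - x t)) : ℂ) := by
    simp only [φ, PiLp.inner_apply, RCLike.inner_apply]
    rw [Fin.sum_univ_eq_sum_range (fun n ↦ (𝐞 (-(n * x t)) : ℂ) *
      starRingEnd ℂ (𝐞 (-(n * x r)) : ℂ)) N]
    refine sum_congr rfl fun n _ ↦ ?_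
    rw [← Circle.coe_inv_eq_conj, ← AddChar.map_neg_eq_inv, ← Circle.coe_mul,
      ← AddChar.map_add_eq_mul]
    ring_nf
  have norm_v : ‖v‖ ^ 2 = ∑ n ∈ s, ‖a n‖ ^ 2 := by
    rw [EuclideanSpace.norm_sq_eq, Fin.sum_univ_eq_sum_range
      (fun n ↦ ‖if n ∈ s then a n else 0‖ ^ 2) N, ← sum_subset hs]
    · exact sum_congr rfl fun n hn ↦ by rw [if_pos hn]
    · intro n _ hn
      rw [if_neg hn, norm_zero, sq, zero_mul]
  simp only [← inner_φ_v, ← norm_v]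
  refine sum_norm_inner_sq_le R φ ?_ (fun r hr ↦ ?_) v
  · have := Real.log_nonneg ((one_le_inv₀ hδ).2 hδ')
    positivity
  · simp only [inner_φ_φ]
    exact sum_norm_sum_range_fourierChar_le R x hδ hδ' hsep N hr

lemma inv_mul_le_norm_div_sub_div {b q b' q' : ℕ} (hb : b < q) (hb' : b' < q')
    (hne : (b / q : ℝ) ≠ b' / q') :
    ((q : ℝ) * q')⁻¹ ≤ ‖((b / q - b' / q' : ℝ) : UnitAddCircle)‖ := by
  have hq : (0 : ℝ) < q := by exact_mod_cast (Nat.zero_le b).trans_lt hb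
  have hq' : (0 : ℝ) < q' := by exact_mod_cast (Nat.zero_le b').trans_lt hb'
  set k := round (b / q - b' / q' : ℝ) with hk
  have eq_div : (b / q - b' / q' - k : ℝ)
      = ((b * q' - b' * q - k * (q * q') : ℤ) : ℝ) / (q * q') := by
    push_cast
    field_simp
  have ne_zero : (b * q' - b' * q - k * (q * q') : ℤ) ≠ 0 := fun h ↦ hne <| by
    rw [h, Int.cast_zero, zero_div] at eq_div
    have lt_one : (b / q : ℝ) < 1 := (div_lt_one hq).2 (by exact_mod_cast hb)
    have lt_one' : (b' / q' : ℝ) < 1 := (div_lt_one hq').2 (by exact_mod_cast hb')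
    have nonneg : (0 : ℝ) ≤ b / q := by positivity
    have nonneg' : (0 : ℝ) ≤ b' / q' := by positivity
    have k_lt : k < 1 := by exact_mod_cast (by linarith : (k : ℝ) < 1)
    have lt_k : -1 < k := by exact_mod_cast (by push_cast; linarith : ((-1 : ℤ) : ℝ) < k)
    have k_eq : k = 0 := by omega
    rw [k_eq, Int.cast_zero] at eq_div
    linarith
  rw [UnitAddCircle.norm_eq, ← hk, eq_div, abs_div, abs_of_pos (mul_pos hq hq'), inv_eq_one_div]
  gcongr
  exact_mod_cast Int.one_le_abs ne_zero

theorem large_sieve (Q : ℕ) {N : ℕ} {s : Finset ℕ} (hs : s ⊆ range N) (a : ℕ → ℂ) :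
    ∑ q ∈ Icc 1 Q, ∑ b ∈ range q with b.Coprime q, ‖trigSum s a (b / q)‖ ^ 2
      ≤ (N + Q ^ 2 * (1 + 2 * Real.log Q)) * ∑ n ∈ s, ‖a n‖ ^ 2 := by
  rcases Q.eq_zero_or_pos with rfl | hQ
  · simp only [zero_lt_one, Icc_eq_empty_of_lt, sum_empty, Nat.cast_zero]
    positivity
  have one_le_sq : (1 : ℝ) ≤ Q ^ 2 := by exact_mod_cast Nat.one_le_pow _ _ hQ
  rw [sum_sigma']
  have := sum_norm_trigSum_sq_le_of_separated
    ((Icc 1 Q).sigma fun q ↦ {b ∈ range q | b.Coprime q}) (fun r ↦ (r.2 / r.1 : ℝ))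
    (inv_pos.2 (zero_lt_one.trans_le one_le_sq)) (inv_le_one_of_one_le₀ one_le_sq) ?_ hs a
  · rwa [inv_inv, Real.log_pow, Nat.cast_ofNat] at this
  rintro ⟨q, b⟩ hqb ⟨q', b'⟩ hqb' hne
  simp only [coe_sigma, Set.mem_sigma_iff, mem_coe, mem_filter, mem_range, mem_Icc] at hqb hqb'
  obtain ⟨⟨hq, hqQ⟩, hbq, hcop⟩ := hqb
  obtain ⟨⟨hq', hqQ'⟩, hbq', hcop'⟩ := hqb'
  refine le_trans ?_ (inv_mul_le_norm_div_sub_div hbq hbq' fun h ↦ hne ?_)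
  · gcongr
    rw [sq]
    gcongr
  · obtain ⟨hb, hq⟩ := Rat.div_int_inj (a := b) (b := q) (c := b') (d := q') (by omega) (by omega)
      (by simpa using hcop) (by simpa using hcop')
      (Rat.cast_injective (α := ℝ) (by push_cast; exact h))
    norm_cast at hb hq
    rw [hb, hq]

lemma large_sieve_prime {P : Finset ℕ} {Q : ℕ} (hP : ∀ q ∈ P, q.Prime ∧ q ≤ Q) {N : ℕ}
    {s : Finset ℕ} (hs : s ⊆ range N) (a : ℕ → ℂ) :
    ∑ q ∈ P, ∑ b ∈ Ioo 0 q, ‖trigSum s a (b / q)‖ ^ 2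
      ≤ (N + Q ^ 2 * (1 + 2 * Real.log Q)) * ∑ n ∈ s, ‖a n‖ ^ 2 := by
  refine le_trans ?_ (large_sieve Q hs a)
  calc ∑ q ∈ P, ∑ b ∈ Ioo 0 q, ‖trigSum s a (b / q)‖ ^ 2
      ≤ ∑ q ∈ P, ∑ b ∈ range q with b.Coprime q, ‖trigSum s a (b / q)‖ ^ 2 := by
        refine sum_le_sum fun q hq ↦ sum_le_sum_of_subset_of_nonneg (fun b hb ↦ ?_)
          fun _ _ _ ↦ sq_nonneg _
        obtain ⟨hb, hbq⟩ := mem_Ioo.1 hb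
        exact mem_filter.2 ⟨mem_range.2 hbq, (Nat.coprime_of_lt_prime hb.ne' hbq (hP q hq).1).symm⟩
    _ ≤ _ := sum_le_sum_of_subset_of_nonneg
        (fun q hq ↦ mem_Icc.2 ⟨(hP q hq).1.one_le, (hP q hq).2⟩)
        fun _ _ _ ↦ sum_nonneg fun _ _ ↦ sq_nonneg _

end LargeSieve

section BilinearForm

open Finset
open scoped ZMod

lemma sum_norm_dft_sq {q : ℕ} [NeZero q] (f : ZMod q → ℂ) :
    ∑ k, ‖ZMod.dft f k‖ ^ 2 = q * ∑ x, ‖f x‖ ^ 2 := by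
  suffices h : ∑ k, starRingEnd ℂ (ZMod.dft f k) * ZMod.dft f k
      = q * ∑ x, starRingEnd ℂ (f x) * f x by
    simp only [Complex.conj_mul'] at h
    exact_mod_cast h
  calc ∑ k, starRingEnd ℂ (ZMod.dft f k) * ZMod.dft f k
      = ∑ k, ∑ x, starRingEnd ℂ (f x) * (ZMod.stdAddChar (k * x) * ZMod.dft f k) := by
        refine sum_congr rfl fun k _ ↦ ?_
        rw [ZMod.dft_apply f, map_sum, sum_mul]
        refine sum_congr rfl fun x _ ↦ ?_
        rw [smul_eq_mul, map_mul, AddChar.map_neg_eq_conj, Complex.conj_conj, mul_comm k]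
        ring
    _ = ∑ x, starRingEnd ℂ (f x) * ZMod.dft (ZMod.dft f) (-x) := by
        rw [sum_comm]
        refine sum_congr rfl fun x _ ↦ ?_
        simp only [ZMod.dft_apply (ZMod.dft f), mul_sum, smul_eq_mul, mul_neg, neg_neg]
    _ = q * ∑ x, starRingEnd ℂ (f x) * f x := by
        simp only [ZMod.dft_dft, neg_neg, smul_eq_mul, mul_sum]
        exact sum_congr rfl fun x _ ↦ by ring

lemma mul_sum_norm_sub_mean_sq {q : ℕ} [NeZero q] (f : ZMod q → ℂ) :
    q * ∑ x, ‖f x - (∑ y, f y) / q‖ ^ 2 = ∑ k ∈ univ.erase 0, ‖ZMod.dft f k‖ ^ 2 := by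
  have q_ne_zero : (q : ℂ) ≠ 0 := Nat.cast_ne_zero.2 (NeZero.ne q)
  set g : ZMod q → ℂ := fun x ↦ f x - (∑ y, f y) / q with hg
  have dft_zero : ZMod.dft g 0 = 0 := by
    simp only [ZMod.dft_apply_zero, hg, sum_sub_distrib, sum_const, card_univ, ZMod.card,
      nsmul_eq_mul]
    rw [mul_div_cancel₀ _ q_ne_zero, sub_self]
  have dft_ne_zero : ∀ k ∈ univ.erase (0 : ZMod q), ZMod.dft g k = ZMod.dft f k := by
    intro k hk
    have : ∑ x, ZMod.stdAddChar (-(x * k)) = 0 := by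
      simp only [← mul_neg]
      rw [AddChar.sum_mulShift _ (ZMod.isPrimitive_stdAddChar q),
        if_neg (neg_ne_zero.2 (ne_of_mem_erase hk)), Nat.cast_zero]
    simp only [ZMod.dft_apply, hg, smul_eq_mul, mul_sub, sum_sub_distrib, ← sum_mul, this,
      zero_mul, sub_zero]
  rw [← sum_norm_dft_sq, ← add_sum_erase _ _ (mem_univ 0), dft_zero, norm_zero, sq, zero_mul,
    zero_add]
  exact sum_congr rfl fun k hk ↦ by rw [dft_ne_zero k hk]

/-- The sums of `a` over the intersections of `s` with the residue classes modulo `q`. -/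
def classSum {R : Type*} [AddCommMonoid R] (q : ℕ) (s : Finset ℕ) (a : ℕ → R) (x : ZMod q) : R :=
  ∑ n ∈ s with ((n : ℕ) : ZMod q) = x, a n

lemma sum_classSum_mul {R : Type*} [NonUnitalNonAssocSemiring R] (q : ℕ) [NeZero q]
    (s : Finset ℕ) (a : ℕ → R) (f : ZMod q → R) :
    ∑ x, classSum q s a x * f x = ∑ n ∈ s, a n * f n := by
  rw [← sum_fiberwise s (fun n : ℕ ↦ (n : ZMod q))]
  refine sum_congr rfl fun x _ ↦ ?_
  rw [classSum, sum_mul]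
  exact sum_congr rfl fun n hn ↦ by rw [(mem_filter.1 hn).2]

lemma sum_classSum {R : Type*} [AddCommMonoid R] (q : ℕ) [NeZero q] (s : Finset ℕ) (a : ℕ → R) :
    ∑ x, classSum q s a x = ∑ n ∈ s, a n :=
  sum_fiberwise s (fun n : ℕ ↦ (n : ZMod q)) a

lemma dft_classSum_neg_natCast (q : ℕ) [NeZero q] (s : Finset ℕ) (a : ℕ → ℂ) (b : ℕ) :
    ZMod.dft (classSum q s a) (-b) = trigSum s a (b / q) := by
  simp only [ZMod.dft_apply, mul_neg, neg_neg, smul_eq_mul]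
  simp only [mul_comm (ZMod.stdAddChar _)]
  rw [sum_classSum_mul q s a fun x ↦ ZMod.stdAddChar (x * (b : ZMod q)), trigSum]
  refine sum_congr rfl fun n _ ↦ ?_
  congr 1
  have := ZMod.stdAddChar_coe (N := q) (n * b : ℤ)
  push_cast at this
  rw [this, Real.fourierChar_apply]
  congr 1
  push_cast
  ring

theorem mul_sum_norm_classSum_sub_mean_sq (q : ℕ) [NeZero q] (s : Finset ℕ) (a : ℕ → ℂ) :
    q * ∑ x, ‖classSum q s a x - (∑ n ∈ s, a n) / q‖ ^ 2
      = ∑ b ∈ Ioo 0 q, ‖trigSum s a (b / q)‖ ^ 2 := by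
  rw [← sum_classSum q s a, mul_sum_norm_sub_mean_sq]
  symm
  refine sum_bij' (fun b _ ↦ -(b : ZMod q)) (fun k _ ↦ (-k).val) ?_ ?_ ?_ ?_ ?_
  · intro b hb
    obtain ⟨b_pos, b_lt⟩ := mem_Ioo.1 hb
    refine mem_erase.2 ⟨neg_ne_zero.2 fun h ↦ ?_, mem_univ _⟩
    exact (Nat.le_of_dvd b_pos ((ZMod.natCast_eq_zero_iff _ _).1 h)).not_gt b_lt
  · intro k hk
    have neg_k_ne_zero : -k ≠ 0 := neg_ne_zero.2 (ne_of_mem_erase hk)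
    exact mem_Ioo.2 ⟨Nat.pos_of_ne_zero ((ZMod.val_ne_zero _).2 neg_k_ne_zero), ZMod.val_lt _⟩
  · intro b hb
    rw [neg_neg, ZMod.val_cast_of_lt (mem_Ioo.1 hb).2]
  · intro k _
    rw [ZMod.natCast_zmod_val, neg_neg]
  · intro b _
    rw [dft_classSum_neg_natCast]

open Classical in
/-- The weight `w` on `ℤ/q` for which `∑ n, a n * w n` is the sum of `a` over the class of `1` minus
the average of its sums over the reduced residue classes. -/
noncomputable def discrepancyWeight (q : ℕ) (x : ZMod q) : ℝ :=
  (if x = 1 then 1 else 0) - if IsUnit x then (q.totient : ℝ)⁻¹ else 0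

lemma discrepancyWeight_of_not_isUnit {q : ℕ} {x : ZMod q} (hx : ¬IsUnit x) :
    discrepancyWeight q x = 0 := by
  have ne_one : x ≠ 1 := fun h ↦ hx (h ▸ isUnit_one)
  rw [discrepancyWeight, if_neg hx, if_neg ne_one, sub_zero]

lemma sum_eq_sum_units {M : Type*} [Monoid M] [Fintype M] [Fintype Mˣ] (f : M → ℝ)
    (hf : ∀ x, ¬IsUnit x → f x = 0) : ∑ x, f x = ∑ u : Mˣ, f u :=
  (Fintype.sum_of_injective _ Units.val_injective (fun u : Mˣ ↦ f u) f hf fun _ ↦ rfl).symm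

lemma sum_mul_discrepancyWeight_units_mul {q : ℕ} [NeZero q] (B : ZMod q → ℝ) (u : (ZMod q)ˣ) :
    ∑ y, B y * discrepancyWeight q (u * y)
      = B ↑u⁻¹ - (∑ v : (ZMod q)ˣ, B v) / q.totient := by
  rw [sum_eq_sum_units _ fun y hy ↦ by
    rw [discrepancyWeight_of_not_isUnit (by rwa [Units.isUnit_units_mul]), mul_zero]]
  have eq_one_iff (v : (ZMod q)ˣ) : (u * v : ZMod q) = 1 ↔ v = u⁻¹ := by
    rw [← Units.val_mul, Units.val_eq_one, mul_eq_one_iff_eq_inv']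
  simp only [discrepancyWeight, eq_one_iff, Units.isUnit_units_mul, Units.isUnit, if_true, mul_sub,
    mul_ite, mul_one, mul_zero, sum_sub_distrib, sum_ite_eq', mem_univ, ← sum_mul, div_eq_mul_inv]

lemma sum_sub_average_sq_le {ι : Type*} (s : Finset ι) (f : ι → ℝ) (c : ℝ) :
    ∑ i ∈ s, (f i - (∑ j ∈ s, f j) / #s) ^ 2 ≤ ∑ i ∈ s, (f i - c) ^ 2 := by
  rcases s.eq_empty_or_nonempty with rfl | hs
  · simp
  have card_ne_zero : (#s : ℝ) ≠ 0 := by exact_mod_cast hs.card_pos.ne'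
  set d := (∑ j ∈ s, f j) / #s with hd
  have sum_sub : ∑ i ∈ s, (f i - d) = 0 := by
    rw [sum_sub_distrib, sum_const, nsmul_eq_mul, hd, mul_div_cancel₀ _ card_ne_zero, sub_self]
  have split : ∑ i ∈ s, (f i - c) ^ 2
      = ∑ i ∈ s, (f i - d) ^ 2 + 2 * (d - c) * ∑ i ∈ s, (f i - d) + #s * (d - c) ^ 2 := by
    rw [mul_sum, ← nsmul_eq_mul, ← sum_const, ← sum_add_distrib, ← sum_add_distrib]
    exact sum_congr rfl fun i _ ↦ by ring
  rw [split, sum_sub]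
  have : 0 ≤ #s * (d - c) ^ 2 := by positivity
  linarith

theorem sum_sum_mul_discrepancyWeight_sq_le {q : ℕ} [NeZero q] (A B : ZMod q → ℝ) (c e : ℝ) :
    (∑ x, ∑ y, A x * B y * discrepancyWeight q (x * y)) ^ 2
      ≤ (∑ x, (A x - c) ^ 2) * ∑ y, (B y - e) ^ 2 := by
  set d : ℝ := (∑ v : (ZMod q)ˣ, B v) / q.totient with hd
  have card_units : (#(univ : Finset (ZMod q)ˣ) : ℝ) = q.totient := by
    rw [card_univ, ZMod.card_units_eq_totient]
  have sum_inv (f : (ZMod q)ˣ → ℝ) : ∑ u, f u⁻¹ = ∑ u, f u := Equiv.sum_comp (Equiv.inv _) f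
  have sum_dev : ∑ u : (ZMod q)ˣ, (B ↑u⁻¹ - d) = 0 := by
    have : (q.totient : ℝ) ≠ 0 := by
      exact_mod_cast (Nat.totient_pos.2 (NeZero.pos q)).ne'
    rw [sum_inv fun v ↦ B v - d, sum_sub_distrib, sum_const,
      nsmul_eq_mul, card_units, hd, mul_div_cancel₀ _ this, sub_self]
  have form_eq : ∑ x, ∑ y, A x * B y * discrepancyWeight q (x * y)
      = ∑ u : (ZMod q)ˣ, (A u - c) * (B ↑u⁻¹ - d) := by
    simp only [mul_assoc, ← mul_sum]
    rw [sum_eq_sum_units _ fun x hx ↦ by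
      rw [sum_eq_zero fun y _ ↦ by
        rw [discrepancyWeight_of_not_isUnit (mt isUnit_of_mul_isUnit_left hx), mul_zero], mul_zero]]
    simp only [sum_mul_discrepancyWeight_units_mul, ← hd, sub_mul,
      sum_sub_distrib (f := fun _ ↦ _ * _), ← mul_sum, sum_dev, mul_zero, sub_zero]
  have sum_units_le (f : ZMod q → ℝ) : ∑ u : (ZMod q)ˣ, f u ^ 2 ≤ ∑ x, f x ^ 2 := by
    refine (sum_map univ ⟨_, Units.val_injective⟩ fun x ↦ f x ^ 2).symm.trans_le ?_
    exact sum_le_sum_of_subset_of_nonneg (subset_univ _) fun _ _ _ ↦ sq_nonneg _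
  rw [form_eq]
  refine (sum_mul_sq_le_sq_mul_sq _ _ _).trans (mul_le_mul ?_ ?_ ?_ ?_)
  · exact sum_units_le fun x ↦ A x - c
  · rw [sum_inv fun v ↦ (B v - d) ^ 2, hd, ← card_units]
    exact (sum_sub_average_sq_le _ _ e).trans (sum_units_le fun x ↦ B x - e)
  all_goals exact sum_nonneg fun _ _ ↦ sq_nonneg _

lemma sum_sum_mul_discrepancyWeight_eq_classSum (q : ℕ) [NeZero q] (s t : Finset ℕ) (a b : ℕ → ℝ) :
    ∑ m ∈ s, ∑ n ∈ t, a m * b n * discrepancyWeight q ((m * n : ℕ) : ZMod q)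
      = ∑ x, ∑ y, classSum q s a x * classSum q t b y * discrepancyWeight q (x * y) := by
  simp only [mul_assoc, ← mul_sum]
  rw [sum_classSum_mul q s a fun x ↦ ∑ y, classSum q t b y * discrepancyWeight q (x * y)]
  refine sum_congr rfl fun m _ ↦ ?_
  rw [sum_classSum_mul q t b fun y ↦ discrepancyWeight q (m * y)]
  simp only [Nat.cast_mul]

lemma mul_sum_classSum_sub_mean_sq (q : ℕ) [NeZero q] (s : Finset ℕ) (a : ℕ → ℝ) :
    q * ∑ x, (classSum q s a x - (∑ n ∈ s, a n) / q) ^ 2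
      = ∑ b ∈ Ioo 0 q, ‖trigSum s (fun n ↦ a n) (b / q)‖ ^ 2 := by
  rw [← mul_sum_norm_classSum_sub_mean_sq]
  congr 1
  refine sum_congr rfl fun x _ ↦ ?_
  rw [← sq_abs, ← Real.norm_eq_abs, ← Complex.norm_real, classSum, classSum]
  push_cast
  rfl

lemma mul_abs_sum_sum_mul_discrepancyWeight_le (q : ℕ) [NeZero q] (s t : Finset ℕ) (a b : ℕ → ℝ) :
    q * |∑ m ∈ s, ∑ n ∈ t, a m * b n * discrepancyWeight q ((m * n : ℕ) : ZMod q)|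
      ≤ √(∑ c ∈ Ioo 0 q, ‖trigSum s (fun n ↦ a n) (c / q)‖ ^ 2)
        * √(∑ c ∈ Ioo 0 q, ‖trigSum t (fun n ↦ b n) (c / q)‖ ^ 2) := by
  have abs_natCast_mul (y : ℝ) : q * |y| = |q * y| := by rw [abs_mul, Nat.abs_cast]
  rw [sum_sum_mul_discrepancyWeight_eq_classSum, ← mul_sum_classSum_sub_mean_sq,
    ← mul_sum_classSum_sub_mean_sq, ← Real.sqrt_mul (by positivity), abs_natCast_mul]
  refine Real.abs_le_sqrt ?_
  rw [mul_pow, mul_mul_mul_comm, ← sq]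
  gcongr
  exact sum_sum_mul_discrepancyWeight_sq_le _ _ _ _

theorem mul_sum_abs_sum_sum_mul_discrepancyWeight_le {P : Finset ℕ} {Q₀ : ℝ} {Q : ℕ}
    (hP : ∀ q ∈ P, q.Prime ∧ Q₀ ≤ q ∧ q ≤ Q) {M N : ℕ} {s t : Finset ℕ} (hs : s ⊆ range M)
    (ht : t ⊆ range N) (a b : ℕ → ℝ) :
    Q₀ * ∑ q ∈ P, |∑ m ∈ s, ∑ n ∈ t, a m * b n * discrepancyWeight q ((m * n : ℕ) : ZMod q)|
      ≤ √((M + Q ^ 2 * (1 + 2 * Real.log Q)) * ∑ m ∈ s, a m ^ 2)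
        * √((N + Q ^ 2 * (1 + 2 * Real.log Q)) * ∑ n ∈ t, b n ^ 2) := by
  let E (s : Finset ℕ) (a : ℕ → ℝ) (q : ℕ) : ℝ :=
    ∑ c ∈ Ioo 0 q, ‖trigSum s (fun n ↦ a n) (c / q)‖ ^ 2
  have E_nonneg (s a q) : 0 ≤ E s a q := sum_nonneg fun _ _ ↦ sq_nonneg _
  have sum_E_le {N : ℕ} {s : Finset ℕ} (hs : s ⊆ range N) (a : ℕ → ℝ) :
      ∑ q ∈ P, E s a q ≤ (N + Q ^ 2 * (1 + 2 * Real.log Q)) * ∑ n ∈ s, a n ^ 2 := by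
    have := large_sieve_prime (fun q hq ↦ ⟨(hP q hq).1, (hP q hq).2.2⟩) hs fun n ↦ (a n : ℂ)
    simpa only [Complex.norm_real, Real.norm_eq_abs, sq_abs] using this
  rw [mul_sum]
  calc ∑ q ∈ P, Q₀ * |∑ m ∈ s, ∑ n ∈ t, a m * b n * discrepancyWeight q ((m * n : ℕ) : ZMod q)|
      ≤ ∑ q ∈ P, √(E s a q) * √(E t b q) := sum_le_sum fun q hq ↦ by
        have := NeZero.mk (hP q hq).1.ne_zero
        refine le_trans ?_ (mul_abs_sum_sum_mul_discrepancyWeight_le q s t a b)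
        gcongr
        exact (hP q hq).2.1
    _ ≤ √(∑ q ∈ P, E s a q) * √(∑ q ∈ P, E t b q) :=
        Real.sum_sqrt_mul_sqrt_le _ (E_nonneg s a) (E_nonneg t b)
    _ ≤ _ := by
        gcongr
        exacts [sum_E_le hs a, sum_E_le ht b]

end BilinearForm

section TypeI

open Finset

lemma sum_discrepancyWeight (q : ℕ) [NeZero q] : ∑ x, discrepancyWeight q x = 0 := by
  have h := sum_mul_discrepancyWeight_units_mul (q := q) 1 1
  have totient_ne_zero : (q.totient : ℝ) ≠ 0 :=
    Nat.cast_ne_zero.2 (Nat.totient_pos.2 (NeZero.pos q)).ne'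
  simpa only [Pi.one_apply, one_mul, Units.val_one, sum_const, card_univ,
    ZMod.card_units_eq_totient, nsmul_eq_mul, mul_one, div_self totient_ne_zero, sub_self] using h

lemma abs_discrepancyWeight_le (q : ℕ) (x : ZMod q) :
    |discrepancyWeight q x| ≤ (if x = 1 then 1 else 0) + (q.totient : ℝ)⁻¹ := by
  rw [discrepancyWeight, abs_le]
  have : (0 : ℝ) ≤ (q.totient : ℝ)⁻¹ := by positivity
  split_ifs <;> constructor <;> linarith

lemma abs_discrepancyWeight_le_one (q : ℕ) (x : ZMod q) : |discrepancyWeight q x| ≤ 1 := by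
  rw [discrepancyWeight, abs_le]
  have : (q.totient : ℝ)⁻¹ ≤ 1 := Nat.cast_inv_le_one _
  have : (0 : ℝ) ≤ (q.totient : ℝ)⁻¹ := by positivity
  split_ifs <;> constructor <;> linarith

lemma sum_abs_discrepancyWeight_le (q : ℕ) [NeZero q] : ∑ x, |discrepancyWeight q x| ≤ 2 := by
  have pointwise (x : ZMod q) :
      |discrepancyWeight q x| ≤ (if x = 1 then 2 else 0) - discrepancyWeight q x := by
    have le_one := abs_discrepancyWeight_le_one q x
    by_cases hx : x = 1
    · rw [if_pos hx]
      linarith [le_abs_self (discrepancyWeight q x)]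
    · have : discrepancyWeight q x ≤ 0 := by
        rw [discrepancyWeight, if_neg hx, zero_sub, neg_nonpos]
        positivity
      rw [if_neg hx, abs_of_nonpos this, zero_sub]
  calc ∑ x, |discrepancyWeight q x|
      ≤ ∑ x, ((if x = 1 then 2 else 0) - discrepancyWeight q x) := sum_le_sum fun x _ ↦ pointwise x
    _ = 2 := by
      rw [sum_sub_distrib, sum_discrepancyWeight, sum_ite_eq', if_pos (mem_univ _), sub_zero]

lemma abs_classSum_one_sub_le (q : ℕ) [NeZero q] (X : ℕ) (x : ZMod q) :
    |classSum q (Ioc 0 X) 1 x - (X : ℝ) / q| ≤ 1 := by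
  have q_pos := NeZero.pos q
  have class_eq : {n ∈ Ioc 0 X | ((n : ℕ) : ZMod q) = x} = {n ∈ Ioc 0 X | n ≡ x.val [MOD q]} :=
    filter_congr fun n _ ↦ by rw [← ZMod.natCast_eq_natCast_iff, ZMod.natCast_zmod_val]
  have card_eq := Nat.Ioc_filter_modEq_card 0 X q_pos x.val
  simp only [classSum, Pi.one_apply, sum_const, nsmul_eq_mul, mul_one, class_eq]
  set k := #{n ∈ Ioc 0 X | n ≡ x.val [MOD q]}
  set u : ℚ := (X - x.val) / q with hu
  set v : ℚ := (((0 : ℕ) : ℚ) - x.val) / q with hv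
  have u_sub_v : u - v = X / q := by rw [hu, hv]; push_cast; ring
  have v_le_u : v ≤ u := sub_nonneg.1 (u_sub_v ▸ by positivity)
  rw [max_eq_left (sub_nonneg.2 (Int.floor_mono v_le_u))] at card_eq
  have k_eq : (k : ℚ) = ⌊u⌋ - ⌊v⌋ := by exact_mod_cast congrArg (Int.cast (R := ℚ)) card_eq
  have close : |(k : ℚ) - X / q| ≤ 1 := by
    rw [k_eq, abs_le]
    constructor <;> linarith [Int.floor_le u, Int.lt_floor_add_one u, Int.floor_le v,
      Int.lt_floor_add_one v]
  simpa using (Rat.cast_le (K := ℝ)).2 close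

theorem abs_sum_discrepancyWeight_mul_le (q : ℕ) [NeZero q] (a : ZMod q) (X : ℕ) :
    |∑ n ∈ Ioc 0 X, discrepancyWeight q (a * n)| ≤ 2 := by
  by_cases ha : IsUnit a
  swap
  · have not_isUnit (n : ℕ) : ¬IsUnit (a * n) := fun h ↦ ha (isUnit_of_mul_isUnit_left h)
    simp [discrepancyWeight_of_not_isUnit (not_isUnit _)]
  let w (y : ZMod q) : ℝ := discrepancyWeight q (a * y)
  have sum_w (f : ℝ → ℝ) : ∑ y, f (w y) = ∑ y, f (discrepancyWeight q y) :=
    Fintype.sum_equiv ha.unit.mulLeft _ _ fun _ ↦ rfl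
  calc |∑ n ∈ Ioc 0 X, w n|
      = |∑ y, (classSum q (Ioc 0 X) 1 y - (X : ℝ) / q) * w y| := by
        have sum_w_eq_zero : ∑ y, w y = 0 := (sum_w id).trans (sum_discrepancyWeight q)
        simp only [sub_mul, sum_sub_distrib, ← mul_sum, sum_w_eq_zero, sum_classSum_mul,
          Pi.one_apply, one_mul, mul_zero, sub_zero]
    _ ≤ ∑ y, |(classSum q (Ioc 0 X) 1 y - (X : ℝ) / q) * w y| := abs_sum_le_sum_abs _ _
    _ ≤ ∑ y, |w y| := sum_le_sum fun y _ ↦ by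
        rw [abs_mul]
        exact mul_le_of_le_one_left (abs_nonneg _) (abs_classSum_one_sub_le q X y)
    _ ≤ 2 := (sum_w abs).trans_le (sum_abs_discrepancyWeight_le q)

lemma abs_sum_Ioc_mul_le_of_monotone {f g : ℕ → ℝ} {C : ℝ} (hg : Monotone g) (hg₀ : 0 ≤ g 0)
    (hf : ∀ k, |∑ n ∈ Ioc 0 k, f n| ≤ C) (X : ℕ) :
    |∑ n ∈ Ioc 0 X, g n * f n| ≤ 2 * C * g X := by
  have g_nonneg : 0 ≤ g X := hg₀.trans (hg X.zero_le)
  have abel : |∑ n ∈ Ioc 0 X, g n * f n - g X * ∑ n ∈ Ioc 0 X, f n| ≤ C * g X := by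
    clear g_nonneg
    induction X with
    | zero => simpa using mul_nonneg ((abs_nonneg _).trans (hf 0)) hg₀
    | succ X ih =>
      have g_le : 0 ≤ g (X + 1) - g X := sub_nonneg.2 (hg X.le_succ)
      have step : ∑ n ∈ Ioc 0 (X + 1), g n * f n - g (X + 1) * ∑ n ∈ Ioc 0 (X + 1), f n
          = (∑ n ∈ Ioc 0 X, g n * f n - g X * ∑ n ∈ Ioc 0 X, f n)
            - (g (X + 1) - g X) * ∑ n ∈ Ioc 0 X, f n := by
        rw [sum_Ioc_succ_top X.zero_le, sum_Ioc_succ_top X.zero_le]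
        ring
      rw [step]
      refine (abs_sub _ _).trans ?_
      rw [abs_mul, abs_of_nonneg g_le]
      linarith [mul_le_mul_of_nonneg_left (hf X) g_le]
  have last : |g X * ∑ n ∈ Ioc 0 X, f n| ≤ C * g X := by
    rw [abs_mul, abs_of_nonneg g_nonneg, mul_comm]
    gcongr
    exact hf X
  linarith [abs_sub_abs_le_abs_sub (∑ n ∈ Ioc 0 X, g n * f n) (g X * ∑ n ∈ Ioc 0 X, f n)]

lemma monotone_log_natCast : Monotone fun n : ℕ ↦ Real.log n := by
  intro m n hmn
  rcases m.eq_zero_or_pos with rfl | hm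
  · simpa using Real.log_natCast_nonneg n
  · exact Real.log_le_log (by exact_mod_cast hm) (by exact_mod_cast hmn)

lemma abs_sum_log_mul_discrepancyWeight_mul_le (q : ℕ) [NeZero q] (a : ZMod q) (X : ℕ) :
    |∑ n ∈ Ioc 0 X, Real.log n * discrepancyWeight q (a * n)| ≤ 4 * Real.log X := by
  refine (abs_sum_Ioc_mul_le_of_monotone monotone_log_natCast (by simp)
    (abs_sum_discrepancyWeight_mul_le q a) X).trans_eq ?_
  norm_num

end TypeI

section Vaughan

open Finset ArithmeticFunction
open scoped ArithmeticFunction.Moebius ArithmeticFunction.zeta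

/-- The part of `f` supported on `n ≤ U`. -/
def truncate {R : Type*} [Zero R] (f : ArithmeticFunction R) (U : ℕ) : ArithmeticFunction R :=
  ⟨fun n ↦ if n ≤ U then f n else 0, by simp⟩

/-- The part of `f` supported on `n > U`. -/
def tail {R : Type*} [Zero R] (f : ArithmeticFunction R) (U : ℕ) : ArithmeticFunction R :=
  ⟨fun n ↦ if n ≤ U then 0 else f n, by simp⟩

lemma truncate_apply {R : Type*} [Zero R] (f : ArithmeticFunction R) (U n : ℕ) :
    truncate f U n = if n ≤ U then f n else 0 := rfl

lemma tail_apply {R : Type*} [Zero R] (f : ArithmeticFunction R) (U n : ℕ) :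
    tail f U n = if n ≤ U then 0 else f n := rfl

lemma truncate_add_tail {R : Type*} [AddMonoid R] (f : ArithmeticFunction R) (U : ℕ) :
    truncate f U + tail f U = f := by
  ext n
  rw [ArithmeticFunction.add_apply, truncate_apply, tail_apply]
  split_ifs <;> simp

theorem vaughan_identity (U V : ℕ) :
    Λ + truncate Λ V * truncate (μ : ArithmeticFunction ℝ) U * ζ
      = truncate Λ V + truncate (μ : ArithmeticFunction ℝ) U * log
        + tail Λ V * (tail (μ : ArithmeticFunction ℝ) U * ζ) := by
  have truncate_add_tail_Λ := truncate_add_tail Λ V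
  have truncate_add_tail_μ := truncate_add_tail (μ : ArithmeticFunction ℝ) U
  have mul_zeta_Λ : Λ * ζ = log := vonMangoldt_mul_zeta
  have mul_zeta_μ : (μ : ArithmeticFunction ℝ) * ζ = 1 := coe_moebius_mul_coe_zeta
  linear_combination (truncate Λ V - Λ) * mul_zeta_μ
    + truncate (μ : ArithmeticFunction ℝ) U * mul_zeta_Λ
    - ζ * (μ - truncate (μ : ArithmeticFunction ℝ) U) * truncate_add_tail_Λ
    - ζ * tail Λ V * truncate_add_tail_μ

lemma abs_truncate_le (f : ArithmeticFunction ℝ) (U n : ℕ) : |truncate f U n| ≤ |f n| := by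
  rw [truncate_apply]
  split_ifs <;> simp

lemma abs_tail_le (f : ArithmeticFunction ℝ) (U n : ℕ) : |tail f U n| ≤ |f n| := by
  rw [tail_apply]
  split_ifs <;> simp

lemma abs_mul_apply_le {f g F G : ArithmeticFunction ℝ} (hf : ∀ n, |f n| ≤ F n)
    (hg : ∀ n, |g n| ≤ G n) (n : ℕ) : |(f * g) n| ≤ (F * G) n := by
  rw [mul_apply, mul_apply]
  refine (abs_sum_le_sum_abs _ _).trans (sum_le_sum fun x _ ↦ ?_)
  rw [abs_mul]
  exact mul_le_mul (hf _) (hg _) (abs_nonneg _) ((abs_nonneg _).trans (hf _))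

lemma truncate_mul_truncate_apply_of_lt {R : Type*} [Semiring R] (f g : ArithmeticFunction R)
    {U V n : ℕ} (hn : U * V < n) : (truncate f U * truncate g V) n = 0 := by
  rw [mul_apply]
  refine sum_eq_zero fun x hx ↦ ?_
  rw [truncate_apply, truncate_apply]
  split_ifs with h₁ h₂
  · exact absurd (Nat.mul_le_mul h₁ h₂) ((Nat.mem_divisorsAntidiagonal.1 hx).1 ▸ hn).not_ge
  all_goals simp

lemma abs_vonMangoldt (n : ℕ) : |Λ n| = Λ n := abs_of_nonneg vonMangoldt_nonneg

lemma abs_moebius_le_zeta (n : ℕ) :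
    |(μ : ArithmeticFunction ℝ) n| ≤ (ζ : ArithmeticFunction ℝ) n := by
  rcases eq_or_ne n 0 with rfl | hn
  · simp
  rw [intCoe_apply, natCoe_apply, zeta_apply_ne hn]
  exact_mod_cast abs_moebius_le_one

lemma abs_truncate_mul_truncate_le_log (U V n : ℕ) :
    |(truncate Λ V * truncate (μ : ArithmeticFunction ℝ) U) n| ≤ log n := by
  rw [← vonMangoldt_mul_zeta]
  exact abs_mul_apply_le (fun n ↦ (abs_truncate_le _ _ _).trans_eq (abs_vonMangoldt n))
    (fun n ↦ (abs_truncate_le _ _ _).trans (abs_moebius_le_zeta n)) n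

/-- The sum of `f` over `n ≤ N` with `n ≡ 1` modulo `q`, minus the average of its sums over the
reduced residue classes modulo `q`. -/
noncomputable def discrepancy (q N : ℕ) (f : ArithmeticFunction ℝ) : ℝ :=
  ∑ n ∈ Ioc 0 N, f n * discrepancyWeight q n

lemma discrepancy_add (q N : ℕ) (f g : ArithmeticFunction ℝ) :
    discrepancy q N (f + g) = discrepancy q N f + discrepancy q N g := by
  simp only [discrepancy, ArithmeticFunction.add_apply, add_mul, sum_add_distrib]

lemma sum_sum_divisorsAntidiagonal {M : Type*} [AddCommMonoid M] (F : ℕ → ℕ → M) (N : ℕ) :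
    ∑ n ∈ Ioc 0 N, ∑ x ∈ n.divisorsAntidiagonal, F x.1 x.2
      = ∑ m ∈ Ioc 0 N, ∑ k ∈ Ioc 0 (N / m), F m k := by
  rw [sum_sigma', sum_sigma']
  refine sum_bij' (fun x _ ↦ ⟨x.2.1, x.2.2⟩) (fun x _ ↦ ⟨x.1 * x.2, (x.1, x.2)⟩) ?_ ?_ ?_ ?_ ?_
  · rintro ⟨n, m, k⟩ h
    simp only [mem_sigma, mem_Ioc, Nat.mem_divisorsAntidiagonal] at h ⊢
    obtain ⟨⟨n_pos, n_le⟩, rfl, -⟩ := h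
    have m_pos := Nat.pos_of_mul_pos_right n_pos
    have k_pos := Nat.pos_of_mul_pos_left n_pos
    refine ⟨⟨m_pos, (Nat.le_mul_of_pos_right m k_pos).trans n_le⟩, k_pos, ?_⟩
    rwa [Nat.le_div_iff_mul_le m_pos, mul_comm]
  · rintro ⟨m, k⟩ h
    simp only [mem_sigma, mem_Ioc, Nat.mem_divisorsAntidiagonal] at h ⊢
    obtain ⟨⟨m_pos, -⟩, k_pos, k_le⟩ := h
    rw [Nat.le_div_iff_mul_le m_pos, mul_comm] at k_le
    have mk_pos := Nat.mul_pos m_pos k_pos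
    exact ⟨⟨mk_pos, k_le⟩, trivial, mk_pos.ne'⟩
  · rintro ⟨n, m, k⟩ h
    simp only [mem_sigma, Nat.mem_divisorsAntidiagonal] at h
    obtain ⟨-, rfl, -⟩ := h
    rfl
  · intros
    rfl
  · intros
    rfl

lemma sum_mul_apply_mul (f g : ArithmeticFunction ℝ) (w : ℕ → ℝ) (N : ℕ) :
    ∑ n ∈ Ioc 0 N, (f * g) n * w n
      = ∑ m ∈ Ioc 0 N, ∑ k ∈ Ioc 0 (N / m), f m * g k * w (m * k) := by
  rw [← sum_sum_divisorsAntidiagonal fun m k ↦ f m * g k * w (m * k)]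
  refine sum_congr rfl fun n _ ↦ ?_
  rw [mul_apply, sum_mul]
  exact sum_congr rfl fun x hx ↦ by rw [(Nat.mem_divisorsAntidiagonal.1 hx).1]

lemma abs_discrepancy_mul_le {q N U : ℕ} {f g : ArithmeticFunction ℝ} {A B : ℝ}
    (hf : ∀ m ≤ N, |f m| ≤ A) (hf₀ : ∀ m, U < m → f m = 0)
    (hg : ∀ (a : ZMod q), ∀ X ≤ N, |∑ k ∈ Ioc 0 X, g k * discrepancyWeight q (a * k)| ≤ B) :
    |discrepancy q N (f * g)| ≤ U * (A * B) := by
  have A_nonneg : 0 ≤ A := (abs_nonneg _).trans (hf 0 N.zero_le)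
  have B_nonneg : 0 ≤ B := (abs_nonneg _).trans (hg 0 0 N.zero_le)
  rw [discrepancy, sum_mul_apply_mul f g fun n ↦ discrepancyWeight q n]
  calc _ ≤ ∑ m ∈ Ioc 0 N, |∑ k ∈ Ioc 0 (N / m),
          f m * g k * discrepancyWeight q ((m * k : ℕ) : ZMod q)| := abs_sum_le_sum_abs _ _
    _ ≤ ∑ m ∈ Ioc 0 N, if m ≤ U then A * B else 0 := by
        refine sum_le_sum fun m hm ↦ ?_
        simp only [mul_assoc, ← mul_sum, abs_mul, Nat.cast_mul]
        split_ifs with h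
        · exact mul_le_mul (hf m (mem_Ioc.1 hm).2) (hg m _ (Nat.div_le_self _ _)) (abs_nonneg _)
            A_nonneg
        · rw [hf₀ m (not_le.1 h), abs_zero, zero_mul]
    _ ≤ ∑ _m ∈ Ioc 0 U, A * B := by
        rw [← sum_filter]
        refine sum_le_sum_of_subset_of_nonneg (fun m hm ↦ ?_) fun _ _ _ ↦ by positivity
        simp only [mem_filter, mem_Ioc] at hm ⊢
        exact ⟨hm.1.1, hm.2⟩
    _ = U * (A * B) := by simp

lemma abs_discrepancy_truncate_vonMangoldt_le (q N V : ℕ) :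
    |discrepancy q N (truncate Λ V)| ≤ V * Real.log N := by
  rw [← mul_one (truncate Λ V), ← mul_one (Real.log N)]
  refine abs_discrepancy_mul_le (fun m hm ↦ ?_) (fun m hm ↦ if_neg hm.not_ge) fun a X _ ↦ ?_
  · calc |truncate Λ V m| ≤ |Λ m| := abs_truncate_le _ _ _
      _ ≤ Real.log m := (abs_vonMangoldt m).trans_le vonMangoldt_le_log
      _ ≤ Real.log N := monotone_log_natCast hm
  · simp only [one_apply, ite_mul, one_mul, zero_mul, sum_ite_eq']
    split_ifs
    · exact abs_discrepancyWeight_le_one _ _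
    · simp

lemma abs_discrepancy_truncate_moebius_mul_log_le (q N U : ℕ) [NeZero q] :
    |discrepancy q N (truncate (μ : ArithmeticFunction ℝ) U * log)| ≤ U * (4 * Real.log N) := by
  rw [← one_mul (4 * Real.log N)]
  refine abs_discrepancy_mul_le (fun m _ ↦ ?_) (fun m hm ↦ if_neg hm.not_ge) fun a X hX ↦ ?_
  · refine (abs_truncate_le _ _ _).trans ?_
    rw [intCoe_apply]
    exact_mod_cast abs_moebius_le_one
  · simp only [log_apply]
    have log_le := monotone_log_natCast hX
    exact (abs_sum_log_mul_discrepancyWeight_mul_le q a X).trans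
      (mul_le_mul_of_nonneg_left log_le zero_le_four)

lemma abs_discrepancy_truncate_mul_truncate_mul_zeta_le (q N U V : ℕ) [NeZero q] :
    |discrepancy q N (truncate Λ V * truncate (μ : ArithmeticFunction ℝ) U * ζ)|
      ≤ V * U * (Real.log N * 2) := by
  rw [← Nat.cast_mul]
  refine abs_discrepancy_mul_le (fun m hm ↦ ?_)
    (fun m hm ↦ truncate_mul_truncate_apply_of_lt _ _ hm) fun a X _ ↦ ?_
  · exact (abs_truncate_mul_truncate_le_log U V m).trans (monotone_log_natCast hm)
  · have zeta_mul (k : ℕ) (hk : k ∈ Ioc 0 X) :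
        (ζ : ArithmeticFunction ℝ) k * discrepancyWeight q (a * k)
          = discrepancyWeight q (a * k) := by
      rw [natCoe_apply, zeta_apply_ne (mem_Ioc.1 hk).1.ne', Nat.cast_one, one_mul]
    rw [sum_congr rfl zeta_mul]
    exact abs_sum_discrepancyWeight_mul_le q a X

theorem abs_discrepancy_vonMangoldt_le (q N U V : ℕ) [NeZero q] :
    |discrepancy q N Λ|
      ≤ |discrepancy q N (tail Λ V * (tail (μ : ArithmeticFunction ℝ) U * ζ))|
        + (V + 4 * U + 2 * (U * V)) * Real.log N := by
  have identity := congrArg (discrepancy q N) (vaughan_identity U V)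
  simp only [discrepancy_add] at identity
  have hΛ := abs_discrepancy_truncate_vonMangoldt_le q N V
  have hlog := abs_discrepancy_truncate_moebius_mul_log_le q N U
  have hζ := abs_discrepancy_truncate_mul_truncate_mul_zeta_le q N U V
  rw [eq_sub_of_add_eq identity]
  linarith [abs_sub (discrepancy q N (truncate Λ V)
      + discrepancy q N (truncate (μ : ArithmeticFunction ℝ) U * log)
      + discrepancy q N (tail Λ V * (tail (μ : ArithmeticFunction ℝ) U * ζ)))
      (discrepancy q N (truncate Λ V * truncate (μ : ArithmeticFunction ℝ) U * ζ)),
    abs_add_three (discrepancy q N (truncate Λ V))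
      (discrepancy q N (truncate (μ : ArithmeticFunction ℝ) U * log))
      (discrepancy q N (tail Λ V * (tail (μ : ArithmeticFunction ℝ) U * ζ)))]

end Vaughan

section DivisorMoments

open Finset ArithmeticFunction

lemma sum_Ioc_inv_le (X : ℕ) : ∑ n ∈ Ioc 0 X, (n : ℝ)⁻¹ ≤ 1 + Real.log X := by
  have := harmonic_le_one_add_log X
  rw [harmonic_eq_sum_Icc, ← zero_add 1, Icc_add_one_left_eq_Ioc] at this
  push_cast at this
  exact this

lemma sum_card_divisors_le (X : ℕ) :
    ∑ n ∈ Ioc 0 X, (#n.divisors : ℝ) ≤ X * (1 + Real.log X) := by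
  calc ∑ n ∈ Ioc 0 X, (#n.divisors : ℝ)
      = ∑ n ∈ Ioc 0 X, ((X / n : ℕ) : ℝ) := by
        have := sum_Ioc_sigma0_eq_sum_div X
        simp only [sigma_zero_apply] at this
        exact_mod_cast this
    _ ≤ ∑ n ∈ Ioc 0 X, X * (n : ℝ)⁻¹ := sum_le_sum fun n _ ↦ Nat.cast_div_le
    _ ≤ X * (1 + Real.log X) := by
        rw [← mul_sum]
        gcongr
        exact sum_Ioc_inv_le X

lemma card_divisors_eq_sum (n : ℕ) : (#n.divisors : ℝ) = ∑ _x ∈ n.divisorsAntidiagonal, 1 := by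
  rw [sum_const, nsmul_eq_mul, mul_one, ← Nat.map_div_right_divisors, card_map]

lemma sum_card_divisors_div_le (N : ℕ) :
    ∑ n ∈ Ioc 0 N, (#n.divisors : ℝ) / n ≤ (1 + Real.log N) ^ 2 := by
  have := Real.log_natCast_nonneg N
  calc ∑ n ∈ Ioc 0 N, (#n.divisors : ℝ) / n
      = ∑ n ∈ Ioc 0 N, ∑ x ∈ n.divisorsAntidiagonal, (x.1 : ℝ)⁻¹ * (x.2 : ℝ)⁻¹ := by
        refine sum_congr rfl fun n _ ↦ ?_
        rw [card_divisors_eq_sum, sum_div]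
        refine sum_congr rfl fun x hx ↦ ?_
        rw [← (Nat.mem_divisorsAntidiagonal.1 hx).1, Nat.cast_mul, one_div, mul_inv]
    _ = ∑ m ∈ Ioc 0 N, (m : ℝ)⁻¹ * ∑ k ∈ Ioc 0 (N / m), (k : ℝ)⁻¹ := by
        simp only [sum_sum_divisorsAntidiagonal fun m k ↦ (m : ℝ)⁻¹ * (k : ℝ)⁻¹, mul_sum]
    _ ≤ ∑ m ∈ Ioc 0 N, (m : ℝ)⁻¹ * (1 + Real.log N) := by
        gcongr with m
        exact (sum_Ioc_inv_le _).trans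
          (add_le_add_right (monotone_log_natCast (Nat.div_le_self N m)) 1)
    _ ≤ (1 + Real.log N) ^ 2 := by
        rw [← sum_mul, sq]
        gcongr
        exact sum_Ioc_inv_le N

theorem sum_card_divisors_sq_le (N : ℕ) :
    ∑ n ∈ Ioc 0 N, (#n.divisors : ℝ) ^ 2 ≤ N * (1 + Real.log N) ^ 3 := by
  have := Real.log_natCast_nonneg N
  calc ∑ n ∈ Ioc 0 N, (#n.divisors : ℝ) ^ 2
      = ∑ n ∈ Ioc 0 N, ∑ x ∈ n.divisorsAntidiagonal, (#(x.1 * x.2).divisors : ℝ) := by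
        refine sum_congr rfl fun n _ ↦ ?_
        conv_lhs => rw [sq, card_divisors_eq_sum n, sum_mul, ← card_divisors_eq_sum n]
        exact sum_congr rfl fun x hx ↦ by rw [(Nat.mem_divisorsAntidiagonal.1 hx).1, one_mul]
    _ = ∑ m ∈ Ioc 0 N, ∑ k ∈ Ioc 0 (N / m), (#(m * k).divisors : ℝ) :=
        sum_sum_divisorsAntidiagonal (fun m k ↦ (#(m * k).divisors : ℝ)) N
    _ ≤ ∑ m ∈ Ioc 0 N, #m.divisors * ∑ k ∈ Ioc 0 (N / m), (#k.divisors : ℝ) := by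
        simp only [mul_sum]
        gcongr with m _ k
        rw [Nat.divisors_mul]
        exact_mod_cast card_mul_le
    _ ≤ ∑ m ∈ Ioc 0 N, #m.divisors * (N / m * (1 + Real.log N)) := by
        gcongr with m
        refine (sum_card_divisors_le _).trans ?_
        have log_le := monotone_log_natCast (Nat.div_le_self N m)
        exact mul_le_mul Nat.cast_div_le (add_le_add_right log_le 1)
          (add_nonneg zero_le_one (Real.log_natCast_nonneg _)) (by positivity)
    _ = N * (1 + Real.log N) * ∑ m ∈ Ioc 0 N, (#m.divisors : ℝ) / m := by
        rw [mul_sum]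
        exact sum_congr rfl fun m _ ↦ by ring
    _ ≤ N * (1 + Real.log N) * (1 + Real.log N) ^ 2 := by
        gcongr
        exact sum_card_divisors_div_le N
    _ = N * (1 + Real.log N) ^ 3 := by ring

end DivisorMoments

section Decoupling

open Finset ArithmeticFunction

lemma sum_Ioc_eq_sum_sum_Ioc_of_antitone {M : Type*} [AddCommMonoid M] {e : ℕ → ℕ}
    (he : Antitone e) (F : ℕ → M) (K : ℕ) :
    ∑ m ∈ Ioc (e K) (e 0), F m = ∑ i ∈ range K, ∑ m ∈ Ioc (e (i + 1)) (e i), F m := by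
  induction K with
  | zero => simp
  | succ K ih =>
    rw [sum_range_succ, ← ih, add_comm (∑ m ∈ _, _),
      sum_Ioc_consecutive _ (he K.le_succ) (he K.zero_le)]

lemma sum_mul_eq_sum_blocks (H : ℕ → ℕ → ℝ) {l : ℝ} (hl : 1 < l) {N K : ℕ} (hK : N < l ^ K) :
    ∑ m ∈ Ioc 0 N, ∑ k ∈ Ioc 0 (N / m), H m k
      = ∑ i ∈ range K, ∑ m ∈ Ioc ⌊N / l ^ (i + 1)⌋₊ ⌊N / l ^ i⌋₊, ∑ k ∈ Ioc 0 (N / m), H m k := by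
  have antitone : Antitone fun i ↦ ⌊N / l ^ i⌋₊ := fun i j hij ↦
    Nat.floor_mono (div_le_div_of_nonneg_left N.cast_nonneg (by positivity)
      (pow_le_pow_right₀ hl.le hij))
  rw [← sum_Ioc_eq_sum_sum_Ioc_of_antitone antitone]
  have floor_K : ⌊N / l ^ K⌋₊ = 0 := Nat.floor_eq_zero.2 ((div_lt_one (by positivity)).2 hK)
  simp only [pow_zero, div_one, Nat.floor_natCast, floor_K]

lemma abs_sum_sub_sum_floor_le (H : ℕ → ℝ) {l : ℝ} (hl : 0 < l) {N m i : ℕ}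
    (hm : m ∈ Ioc ⌊N / l ^ (i + 1)⌋₊ ⌊N / l ^ i⌋₊) :
    |∑ k ∈ Ioc 0 (N / m), H k - ∑ k ∈ Ioc 0 ⌊l ^ i⌋₊, H k|
      ≤ ∑ k ∈ Ioc 0 (N / m) with N < l * (m * k : ℕ), |H k| := by
  obtain ⟨lt_m, m_le⟩ := mem_Ioc.1 hm
  replace lt_m : N / l ^ (i + 1) < m := (Nat.floor_lt (by positivity)).1 lt_m
  have m_pos : (0 : ℝ) < m := lt_of_le_of_lt (by positivity) lt_m
  replace m_le : m ≤ N / l ^ i := (Nat.le_floor_iff (by positivity)).1 m_le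
  have floor_le : ⌊l ^ i⌋₊ ≤ N / m := by
    rw [← Nat.floor_div_eq_div (K := ℝ)]
    refine Nat.floor_mono ?_
    rwa [le_div_iff₀ m_pos, mul_comm, ← le_div_iff₀ (by positivity)]
  rw [← sum_Ioc_consecutive _ (Nat.zero_le _) floor_le, add_sub_cancel_left]
  refine (abs_sum_le_sum_abs _ _).trans
    (sum_le_sum_of_subset_of_nonneg (fun k hk ↦ ?_) fun _ _ _ ↦ abs_nonneg _)
  obtain ⟨lt_k, k_le⟩ := mem_Ioc.1 hk
  refine mem_filter.2 ⟨mem_Ioc.2 ⟨lt_k.pos, k_le⟩, ?_⟩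
  rw [div_lt_iff₀ (by positivity), pow_succ] at lt_m
  calc (N : ℝ) < m * (l ^ i * l) := lt_m
    _ ≤ m * (k * l) := by gcongr; exact ((Nat.floor_lt (by positivity)).1 lt_k).le
    _ = l * (m * k : ℕ) := by push_cast; ring

/-- Removing the condition `m * k ≤ N`: the variable `m` is cut into the geometric blocks
`N / l ^ (i + 1) < m ≤ N / l ^ i`, on each of which the condition `k ≤ N / m` becomes `k ≤ l ^ i` up
to pairs with `N < l * m * k`. -/
theorem abs_sum_mul_apply_mul_le {f g F G : ArithmeticFunction ℝ} (hf : ∀ n, |f n| ≤ F n)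
    (hg : ∀ n, |g n| ≤ G n) (w : ℕ → ℝ) {l : ℝ} (hl : 1 < l) {N K : ℕ} (hK : N < l ^ K) :
    |∑ n ∈ Ioc 0 N, (f * g) n * w n|
      ≤ ∑ i ∈ range K, |∑ m ∈ Ioc ⌊N / l ^ (i + 1)⌋₊ ⌊N / l ^ i⌋₊, ∑ k ∈ Ioc 0 ⌊l ^ i⌋₊,
          f m * g k * w (m * k)|
        + ∑ n ∈ Ioc 0 N with N < l * (n : ℕ), (F * G) n * |w n| := by
  let v (n : ℕ) : ℝ := if (N : ℝ) < l * n then |w n| else 0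
  have edge_eq : ∑ n ∈ Ioc 0 N with N < l * (n : ℕ), (F * G) n * |w n|
      = ∑ n ∈ Ioc 0 N, (F * G) n * v n := by
    simp only [sum_filter, v, mul_ite, mul_zero]
  rw [edge_eq, sum_mul_apply_mul, sum_mul_apply_mul, sum_mul_eq_sum_blocks _ hl hK,
    sum_mul_eq_sum_blocks _ hl hK, ← sum_add_distrib]
  refine (abs_sum_le_sum_abs _ _).trans (sum_le_sum fun i _ ↦ ?_)
  rw [← sub_le_iff_le_add']
  refine (abs_sub_abs_le_abs_sub _ _).trans ?_
  rw [← sum_sub_distrib]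
  refine (abs_sum_le_sum_abs _ _).trans (sum_le_sum fun m hm ↦ ?_)
  refine (abs_sum_sub_sum_floor_le _ (by positivity) hm).trans ?_
  simp only [sum_filter, abs_mul, v, mul_ite, mul_zero]
  gcongr with k _
  split_ifs
  · gcongr
    exacts [(abs_nonneg _).trans (hf m), hf m, hg k]
  · exact le_rfl

lemma card_filter_lt_mul_le (N : ℕ) {l : ℝ} (hl : 1 ≤ l) :
    (#{n ∈ Ioc 0 N | N < l * (n : ℕ)} : ℝ) ≤ (l - 1) * N + 1 := by
  have nonneg : 0 ≤ (l - 1) * N := mul_nonneg (sub_nonneg.2 hl) N.cast_nonneg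
  have card_le : #{n ∈ Ioc 0 N | N < l * (n : ℕ)} ≤ #(range (⌊(l - 1) * N⌋₊ + 1)) := by
    refine card_le_card_of_injOn (N - ·) (fun n hn ↦ ?_) fun m hm n hn h ↦ ?_
    · simp only [coe_filter, mem_Ioc, Set.mem_ofPred_eq] at hn
      have n_le : (n : ℝ) ≤ N := by exact_mod_cast hn.1.2
      rw [coe_range, Set.mem_Iio, Nat.lt_succ_iff, Nat.le_floor_iff nonneg, Nat.cast_sub hn.1.2]
      linarith [mul_le_mul_of_nonneg_left n_le (sub_nonneg.2 hl)]
    · simp only [coe_filter, mem_Ioc, Set.mem_ofPred_eq] at hm hn h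
      omega
  rw [card_range] at card_le
  calc _ ≤ ((⌊(l - 1) * N⌋₊ + 1 : ℕ) : ℝ) := by exact_mod_cast card_le
    _ ≤ (l - 1) * N + 1 := by push_cast; gcongr; exact Nat.floor_le nonneg

end Decoupling

section TypeII

open Finset ArithmeticFunction
open scoped ArithmeticFunction.Moebius ArithmeticFunction.zeta

lemma tail_apply_of_le {R : Type*} [Zero R] (f : ArithmeticFunction R) {U n : ℕ} (hn : n ≤ U) :
    tail f U n = 0 := if_pos hn

lemma tail_mul_apply_of_le {R : Type*} [Semiring R] (f g : ArithmeticFunction R) {U n : ℕ}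
    (hn : n ≤ U) : (tail f U * g) n = 0 := by
  rw [mul_apply]
  refine sum_eq_zero fun x hx ↦ ?_
  rw [tail_apply_of_le f ((Nat.divisor_le (Nat.fst_mem_divisors_of_mem_antidiagonal hx)).trans hn),
    zero_mul]

lemma mul_mul_mul_add_le {U N x z : ℕ} {G : ℝ} (hG : 0 ≤ G) (hU : 0 < U) (hx : U ≤ x)
    (hz : U ≤ z) (hxz : x * z ≤ N) :
    x * z * ((x + G) * (z + G)) ≤ N * (N + 2 * G * N / U + G ^ 2) := by
  have x_le : (x : ℝ) ≤ N / U := by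
    rw [le_div_iff₀ (by positivity)]
    exact_mod_cast (Nat.mul_le_mul_left x hz).trans hxz
  have z_le : (z : ℝ) ≤ N / U := by
    rw [le_div_iff₀' (by positivity)]
    exact_mod_cast (Nat.mul_le_mul_right z hx).trans hxz
  have xz_le : (x * z : ℝ) ≤ N := by exact_mod_cast hxz
  calc (x * z : ℝ) * ((x + G) * (z + G)) = x * z * (x * z + G * x + G * z + G ^ 2) := by ring
    _ ≤ N * (N + G * (N / U) + G * (N / U) + G ^ 2) := by gcongr
    _ = N * (N + 2 * G * N / U + G ^ 2) := by ring

lemma mul_sum_abs_sum_block_le_of_lt {P : Finset ℕ} {Q₀ G : ℝ} {Q : ℕ}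
    (hP : ∀ q ∈ P, q.Prime ∧ Q₀ ≤ q ∧ q ≤ Q) (hG : 1 + Q ^ 2 * (1 + 2 * Real.log Q) ≤ G)
    {f g : ℕ → ℝ} {U N x z : ℕ} (hU : 0 < U) (hx : U < x) (hz : U < z) (hxz : x * z ≤ N) {A B : ℝ}
    (hf : ∑ n ∈ Ioc 0 x, f n ^ 2 ≤ A * x) (hg : ∑ n ∈ Ioc 0 z, g n ^ 2 ≤ B * z) (y : ℕ) :
    Q₀ * ∑ q ∈ P, |∑ m ∈ Ioc y x, ∑ k ∈ Ioc 0 z, f m * g k *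
        discrepancyWeight q ((m * k : ℕ) : ZMod q)|
      ≤ √(A * B * N * (N + 2 * G * N / U + G ^ 2)) := by
  have G_nonneg : 0 ≤ G := le_trans (by positivity) hG
  have A_nonneg : 0 ≤ A := nonneg_of_mul_nonneg_left
    ((sum_nonneg fun _ _ ↦ sq_nonneg _).trans hf) (Nat.cast_pos.2 (hU.trans hx))
  have B_nonneg : 0 ≤ B := nonneg_of_mul_nonneg_left
    ((sum_nonneg fun _ _ ↦ sq_nonneg _).trans hg) (Nat.cast_pos.2 (hU.trans hz))
  have sum_f_le : ∑ m ∈ Ioc y x, f m ^ 2 ≤ A * x :=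
    (sum_le_sum_of_subset_of_nonneg (Ioc_subset_Ioc_left y.zero_le) fun _ _ _ ↦ sq_nonneg _).trans
      hf
  have Ioc_subset (a b : ℕ) : Ioc a b ⊆ range (b + 1) := fun _ h ↦
    mem_range_succ_iff.2 (mem_Ioc.1 h).2
  have large_sieve_le (n : ℕ) : ((n + 1 : ℕ) : ℝ) + Q ^ 2 * (1 + 2 * Real.log Q) ≤ n + G := by
    push_cast
    linarith
  calc _ ≤ _ :=
        mul_sum_abs_sum_sum_mul_discrepancyWeight_le hP (Ioc_subset y x) (Ioc_subset 0 z) f g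
    _ ≤ √((x + G) * (A * x)) * √((z + G) * (B * z)) := by
        gcongr √(?_ * ?_) * √(?_ * ?_)
        exacts [large_sieve_le x, large_sieve_le z]
    _ = √(A * B * (x * z * ((x + G) * (z + G)))) := by
        rw [← Real.sqrt_mul (by positivity)]
        ring_nf
    _ ≤ √(A * B * (N * (N + 2 * G * N / U + G ^ 2))) := by
        gcongr √(_ * ?_)
        exact mul_mul_mul_add_le G_nonneg hU hx.le hz.le hxz
    _ = √(A * B * N * (N + 2 * G * N / U + G ^ 2)) := by rw [← mul_assoc]

theorem mul_sum_abs_sum_block_le {P : Finset ℕ} {Q₀ G : ℝ} {Q : ℕ}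
    (hP : ∀ q ∈ P, q.Prime ∧ Q₀ ≤ q ∧ q ≤ Q) (hG : 1 + Q ^ 2 * (1 + 2 * Real.log Q) ≤ G)
    {f g : ℕ → ℝ} {U N : ℕ} (hU : 0 < U) (hf₀ : ∀ n ≤ U, f n = 0) (hg₀ : ∀ n ≤ U, g n = 0)
    {A B : ℝ} (hf : ∀ X ≤ N, ∑ n ∈ Ioc 0 X, f n ^ 2 ≤ A * X)
    (hg : ∀ X ≤ N, ∑ n ∈ Ioc 0 X, g n ^ 2 ≤ B * X) (y : ℕ) {x z : ℕ} (hxz : x * z ≤ N) :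
    Q₀ * ∑ q ∈ P, |∑ m ∈ Ioc y x, ∑ k ∈ Ioc 0 z, f m * g k *
        discrepancyWeight q ((m * k : ℕ) : ZMod q)|
      ≤ √(A * B * N * (N + 2 * G * N / U + G ^ 2)) := by
  have le_of_eq_zero (h : ∀ m ∈ Ioc y x, ∀ k ∈ Ioc 0 z, f m * g k = 0) :
      Q₀ * ∑ q ∈ P, |∑ m ∈ Ioc y x, ∑ k ∈ Ioc 0 z, f m * g k *
        discrepancyWeight q ((m * k : ℕ) : ZMod q)|
        ≤ √(A * B * N * (N + 2 * G * N / U + G ^ 2)) := by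
    rw [sum_eq_zero fun q _ ↦ by
      rw [sum_eq_zero fun m hm ↦ sum_eq_zero fun k hk ↦ by rw [h m hm k hk, zero_mul], abs_zero],
      mul_zero]
    exact Real.sqrt_nonneg _
  rcases le_or_gt x U with x_le | lt_x
  · exact le_of_eq_zero fun m hm k _ ↦ by rw [hf₀ m ((mem_Ioc.1 hm).2.trans x_le), zero_mul]
  rcases le_or_gt z U with z_le | lt_z
  · exact le_of_eq_zero fun m _ k hk ↦ by rw [hg₀ k ((mem_Ioc.1 hk).2.trans z_le), mul_zero]
  exact mul_sum_abs_sum_block_le_of_lt hP hG hU lt_x lt_z hxz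
    (hf x ((Nat.le_mul_of_pos_right x (hU.trans lt_z)).trans hxz))
    (hg z ((Nat.le_mul_of_pos_left z (hU.trans lt_x)).trans hxz)) y

theorem sum_abs_discrepancy_mul_le {P : Finset ℕ} {Q₀ G : ℝ} {Q : ℕ} (hQ₀ : 0 < Q₀)
    (hP : ∀ q ∈ P, q.Prime ∧ Q₀ ≤ q ∧ q ≤ Q) (hG : 1 + Q ^ 2 * (1 + 2 * Real.log Q) ≤ G)
    {f g F H : ArithmeticFunction ℝ} {U N : ℕ} (hU : 0 < U) (hf₀ : ∀ n ≤ U, f n = 0)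
    (hg₀ : ∀ n ≤ U, g n = 0) {A B : ℝ} (hf : ∀ X ≤ N, ∑ n ∈ Ioc 0 X, f n ^ 2 ≤ A * X)
    (hg : ∀ X ≤ N, ∑ n ∈ Ioc 0 X, g n ^ 2 ≤ B * X) (hF : ∀ n, |f n| ≤ F n) (hH : ∀ n, |g n| ≤ H n)
    {l : ℝ} (hl : 1 < l) {K : ℕ} (hK : N < l ^ K) :
    ∑ q ∈ P, |discrepancy q N (f * g)|
      ≤ K * (√(A * B * N * (N + 2 * G * N / U + G ^ 2)) / Q₀)
        + ∑ n ∈ Ioc 0 N with N < l * (n : ℕ),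
            (F * H) n * ∑ q ∈ P, |discrepancyWeight q (n : ZMod q)| := by
  have floor_mul_floor_le (i : ℕ) : ⌊N / l ^ i⌋₊ * ⌊l ^ i⌋₊ ≤ N := by
    have pow_pos : 0 < l ^ i := by positivity
    have : (⌊N / l ^ i⌋₊ * ⌊l ^ i⌋₊ : ℝ) ≤ N / l ^ i * l ^ i := by
      gcongr <;> exact Nat.floor_le (by positivity)
    rw [div_mul_cancel₀ _ pow_pos.ne'] at this
    exact_mod_cast this
  refine (sum_le_sum fun q _ ↦ abs_sum_mul_apply_mul_le hF hH
    (fun n ↦ discrepancyWeight q (n : ZMod q)) hl hK).trans ?_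
  rw [sum_add_distrib, sum_comm, sum_comm (s := P)]
  simp only [← mul_sum]
  refine add_le_add_left ?_ _
  calc _ ≤ ∑ _i ∈ range K, √(A * B * N * (N + 2 * G * N / U + G ^ 2)) / Q₀ := ?_
    _ = _ := by rw [sum_const, card_range, nsmul_eq_mul]
  refine sum_le_sum fun i _ ↦ ?_
  rw [le_div_iff₀' hQ₀]
  exact mul_sum_abs_sum_block_le hP hG hU hf₀ hg₀ hf hg _ (floor_mul_floor_le i)

lemma zeta_mul_zeta_apply (n : ℕ) : ((ζ : ArithmeticFunction ℝ) * ζ) n = #n.divisors := by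
  rw [coe_zeta_mul_apply, card_eq_sum_ones, Nat.cast_sum]
  refine sum_congr rfl fun d hd ↦ ?_
  rw [natCoe_apply, zeta_apply_ne (Nat.pos_of_mem_divisors hd).ne']

lemma log_mul_zeta_apply_le (n : ℕ) :
    ((log : ArithmeticFunction ℝ) * ζ) n ≤ #n.divisors * Real.log n := by
  rw [coe_mul_zeta_apply, ← nsmul_eq_mul]
  exact sum_le_card_nsmul _ _ _ fun d hd ↦ monotone_log_natCast (Nat.divisor_le hd)

lemma abs_tail_moebius_mul_zeta_le (U n : ℕ) :
    |(tail (μ : ArithmeticFunction ℝ) U * ζ) n| ≤ ((ζ : ArithmeticFunction ℝ) * ζ) n :=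
  abs_mul_apply_le (fun n ↦ (abs_tail_le _ U n).trans (abs_moebius_le_zeta n))
    (fun n ↦ (abs_of_nonneg (by rw [natCoe_apply]; positivity)).le) n

lemma sum_tail_vonMangoldt_sq_le (U : ℕ) {X N : ℕ} (hX : X ≤ N) :
    ∑ n ∈ Ioc 0 X, tail Λ U n ^ 2 ≤ (1 + Real.log N) ^ 2 * X := by
  calc ∑ n ∈ Ioc 0 X, tail Λ U n ^ 2 ≤ ∑ _n ∈ Ioc 0 X, (1 + Real.log N) ^ 2 := by
        gcongr ∑ _n ∈ _, ?_ with n hn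
        rw [← sq_abs]
        gcongr
        calc |tail Λ U n| ≤ |Λ n| := abs_tail_le Λ U n
          _ ≤ Real.log n := (abs_vonMangoldt n).trans_le vonMangoldt_le_log
          _ ≤ Real.log N := monotone_log_natCast ((mem_Ioc.1 hn).2.trans hX)
          _ ≤ 1 + Real.log N := by linarith
    _ = (1 + Real.log N) ^ 2 * X := by
        rw [sum_const, Nat.card_Ioc, Nat.sub_zero, nsmul_eq_mul, mul_comm]

lemma sum_tail_moebius_mul_zeta_sq_le (U : ℕ) {X N : ℕ} (hX : X ≤ N) :
    ∑ n ∈ Ioc 0 X, (tail (μ : ArithmeticFunction ℝ) U * ζ) n ^ 2 ≤ (1 + Real.log N) ^ 3 * X := by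
  calc ∑ n ∈ Ioc 0 X, (tail (μ : ArithmeticFunction ℝ) U * ζ) n ^ 2
      ≤ ∑ n ∈ Ioc 0 X, (#n.divisors : ℝ) ^ 2 := by
        gcongr ∑ n ∈ _, ?_ with n
        rw [← sq_abs, ← zeta_mul_zeta_apply]
        gcongr
        exact abs_tail_moebius_mul_zeta_le U n
    _ ≤ X * (1 + Real.log X) ^ 3 := sum_card_divisors_sq_le X
    _ ≤ (1 + Real.log N) ^ 3 * X := by
        rw [mul_comm]
        have := Real.log_natCast_nonneg X
        gcongr ((1 + ?_) ^ 3) * _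
        exact monotone_log_natCast hX

lemma sum_filter_card_divisors_le (N : ℕ) {l : ℝ} (hl : 1 ≤ l) :
    ∑ n ∈ Ioc 0 N with N < l * (n : ℕ), (#n.divisors : ℝ)
      ≤ √(((l - 1) * N + 1) * (N * (1 + Real.log N) ^ 3)) := by
  refine Real.le_sqrt_of_sq_le (sq_sum_le_card_mul_sum_sq.trans ?_)
  gcongr
  · exact card_filter_lt_mul_le N hl
  · refine le_trans ?_ (sum_card_divisors_sq_le N)
    exact sum_le_sum_of_subset_of_nonneg (filter_subset _ _) fun n _ _ ↦ sq_nonneg (#n.divisors : ℝ)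

lemma sum_filter_vonMangoldt_mul_zeta_mul_zeta_le (N : ℕ) {l R : ℝ} (hl : 1 ≤ l) (hR₀ : 0 ≤ R)
    {w : ℕ → ℝ} (hw : ∀ n, 1 < n → n ≤ N → w n ≤ R) :
    ∑ n ∈ Ioc 0 N with N < l * (n : ℕ), (Λ * ((ζ : ArithmeticFunction ℝ) * ζ)) n * w n
      ≤ R * Real.log N * √(((l - 1) * N + 1) * (N * (1 + Real.log N) ^ 3)) := by
  have log_nonneg := Real.log_natCast_nonneg N
  have pointwise : ∀ n ∈ Ioc 0 N,
      (Λ * ((ζ : ArithmeticFunction ℝ) * ζ)) n * w n ≤ R * Real.log N * #n.divisors := by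
    intro n hn
    obtain ⟨n_pos, n_le⟩ := mem_Ioc.1 hn
    rw [← mul_assoc, vonMangoldt_mul_zeta]
    obtain n_gt | rfl : 1 < n ∨ n = 1 := LE.le.lt_or_eq' n_pos
    · calc (log * ζ : ArithmeticFunction ℝ) n * w n ≤ (log * ζ : ArithmeticFunction ℝ) n * R := by
            refine mul_le_mul_of_nonneg_left (hw n n_gt n_le) ?_
            rw [coe_mul_zeta_apply]
            exact sum_nonneg fun d _ ↦ Real.log_natCast_nonneg d
        _ ≤ #n.divisors * Real.log N * R := by
            gcongr
            exact (log_mul_zeta_apply_le n).trans (by gcongr)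
        _ = R * Real.log N * #n.divisors := by ring
    · rw [coe_mul_zeta_apply]
      simpa using mul_nonneg hR₀ log_nonneg
  calc _ ≤ ∑ n ∈ Ioc 0 N with N < l * (n : ℕ), R * Real.log N * #n.divisors :=
        sum_le_sum fun n hn ↦ pointwise n (mem_filter.1 hn).1
    _ ≤ R * Real.log N * √(((l - 1) * N + 1) * (N * (1 + Real.log N) ^ 3)) := by
        rw [← mul_sum]
        gcongr
        exact sum_filter_card_divisors_le N hl

end TypeII

section MeanValue

open Finset ArithmeticFunction
open scoped ArithmeticFunction.Moebius ArithmeticFunction.zeta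

lemma card_filter_dvd_le {P : Finset ℕ} {Q₀ : ℝ} (hQ₀ : 0 ≤ Q₀) (hP : ∀ q ∈ P, q.Prime ∧ Q₀ ≤ q)
    {m k : ℕ} (hm : m ≠ 0) (hmk : m < Q₀ ^ (k + 1)) : #{q ∈ P | q ∣ m} ≤ k := by
  by_contra! k_lt
  obtain ⟨s, s_subset, card_s⟩ := exists_subset_card_eq (Nat.succ_le_of_lt k_lt)
  have mem_s {q : ℕ} (hq : q ∈ s) : q ∈ P ∧ q ∣ m := mem_filter.1 (s_subset hq)
  have prod_dvd : ∏ q ∈ s, q ∣ m :=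
    prod_primes_dvd m (fun q hq ↦ (hP q (mem_s hq).1).1.prime) fun q hq ↦ (mem_s hq).2
  refine hmk.not_ge ?_
  calc Q₀ ^ (k + 1) = ∏ _q ∈ s, Q₀ := by rw [prod_const, card_s]
    _ ≤ ∏ q ∈ s, (q : ℝ) := prod_le_prod (fun _ _ ↦ hQ₀) fun q hq ↦ (hP q (mem_s hq).1).2
    _ ≤ m := by
        rw [← Nat.cast_prod]
        exact_mod_cast Nat.le_of_dvd (Nat.pos_of_ne_zero hm) prod_dvd

lemma natCast_eq_one_iff_dvd_sub_one {n : ℕ} (hn : 0 < n) (q : ℕ) :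
    (n : ZMod q) = 1 ↔ q ∣ n - 1 := by
  rw [← ZMod.natCast_eq_zero_iff, Nat.cast_sub hn, Nat.cast_one, sub_eq_zero]

lemma card_filter_natCast_eq_one_le {P : Finset ℕ} {Q₀ : ℝ} (hQ₀ : 0 ≤ Q₀)
    (hP : ∀ q ∈ P, q.Prime ∧ Q₀ ≤ q) {n k : ℕ} (hn : 1 < n) (hnk : n ≤ Q₀ ^ (k + 1)) :
    #{q ∈ P | (n : ZMod q) = 1} ≤ k := by
  simp only [natCast_eq_one_iff_dvd_sub_one hn.pos]
  refine card_filter_dvd_le hQ₀ hP (Nat.sub_ne_zero_of_lt hn) (lt_of_lt_of_le ?_ hnk)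
  exact_mod_cast Nat.sub_one_lt hn.ne_bot

lemma sum_totient_inv_le {P : Finset ℕ} {Q : ℕ} (hP : ∀ q ∈ P, q.Prime ∧ q ≤ Q) :
    ∑ q ∈ P, (q.totient : ℝ)⁻¹ ≤ 1 + Real.log Q := by
  refine le_trans ?_ (sum_Ioc_inv_le Q)
  rw [← sum_image (f := fun n : ℕ ↦ (n : ℝ)⁻¹) (g := Nat.totient)]
  · refine sum_le_sum_of_subset_of_nonneg (image_subset_iff.2 fun q hq ↦ ?_)
      fun _ _ _ ↦ by positivity
    exact mem_Ioc.2 ⟨Nat.totient_pos.2 (hP q hq).1.pos, (Nat.totient_le q).trans (hP q hq).2⟩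
  · intro p hp q hq h
    simp only [Nat.totient_prime (hP p hp).1, Nat.totient_prime (hP q hq).1] at h
    have := (hP p hp).1.pos
    have := (hP q hq).1.pos
    omega

lemma sum_abs_discrepancyWeight_natCast_le {P : Finset ℕ} {Q₀ : ℝ} {Q : ℕ} (hQ₀ : 0 ≤ Q₀)
    (hP : ∀ q ∈ P, q.Prime ∧ Q₀ ≤ q ∧ q ≤ Q) {n k : ℕ} (hn : 1 < n) (hnk : n ≤ Q₀ ^ (k + 1)) :
    ∑ q ∈ P, |discrepancyWeight q (n : ZMod q)| ≤ k + (1 + Real.log Q) := by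
  refine (sum_le_sum fun q _ ↦ abs_discrepancyWeight_le q n).trans ?_
  rw [sum_add_distrib, ← sum_filter, sum_const, nsmul_one]
  gcongr
  · exact card_filter_natCast_eq_one_le hQ₀ (fun q hq ↦ ⟨(hP q hq).1, (hP q hq).2.1⟩) hn hnk
  · exact sum_totient_inv_le fun q hq ↦ ⟨(hP q hq).1, (hP q hq).2.2⟩

theorem sum_abs_discrepancy_vonMangoldt_le {P : Finset ℕ} {Q₀ G : ℝ} {Q : ℕ} (hQ₀ : 0 < Q₀)
    (hP : ∀ q ∈ P, q.Prime ∧ Q₀ ≤ q ∧ q ≤ Q) (hG : 1 + Q ^ 2 * (1 + 2 * Real.log Q) ≤ G) {N : ℕ}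
    (hN : N ≤ Q₀ ^ 3) {U : ℕ} (hU : 0 < U) {l : ℝ} (hl : 1 < l) {K : ℕ} (hK : N < l ^ K) :
    ∑ q ∈ P, |discrepancy q N Λ|
      ≤ #P * ((5 * U + 2 * U ^ 2) * Real.log N)
        + K * (√((1 + Real.log N) ^ 5 * N * (N + 2 * G * N / U + G ^ 2)) / Q₀)
        + (3 + Real.log Q) * Real.log N * √(((l - 1) * N + 1) * (N * (1 + Real.log N) ^ 3)) := by
  have vaughan : ∀ q ∈ P, |discrepancy q N Λ|
      ≤ (5 * U + 2 * U ^ 2) * Real.log N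
        + |discrepancy q N (tail Λ U * (tail (μ : ArithmeticFunction ℝ) U * ζ))| := by
    intro q hq
    have := NeZero.mk (hP q hq).1.ne_zero
    linarith [abs_discrepancy_vonMangoldt_le q N U U]
  have type_II := sum_abs_discrepancy_mul_le hQ₀ hP hG hU (fun n hn ↦ tail_apply_of_le Λ hn)
    (fun n hn ↦ tail_mul_apply_of_le _ _ hn) (fun X hX ↦ sum_tail_vonMangoldt_sq_le U hX)
    (fun X hX ↦ sum_tail_moebius_mul_zeta_sq_le U hX)
    (fun n ↦ (abs_tail_le Λ U n).trans_eq (abs_vonMangoldt n)) (abs_tail_moebius_mul_zeta_le U)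
    hl hK
  have edge := sum_filter_vonMangoldt_mul_zeta_mul_zeta_le N hl.le (by positivity)
    fun n hn hnN ↦ sum_abs_discrepancyWeight_natCast_le (k := 2) hQ₀.le hP hn
      ((Nat.cast_le.2 hnN).trans hN)
  refine (sum_le_sum vaughan).trans ?_
  rw [sum_add_distrib, sum_const, nsmul_eq_mul, add_assoc]
  rw [← pow_add] at type_II
  rw [Nat.cast_ofNat, ← add_assoc, two_add_one_eq_three] at edge
  gcongr
  exact type_II.trans (add_le_add_right edge _)

lemma natCast_lt_one_add_inv_pow (N : ℕ) {D : ℕ} (hD : 0 < D) :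
    N < (1 + (D : ℝ)⁻¹) ^ (D * (Nat.log 2 N + 1)) := by
  have two_le : 2 ≤ (1 + (D : ℝ)⁻¹) ^ D := by
    have inv_nonneg : 0 ≤ (D : ℝ)⁻¹ := by positivity
    have := one_add_mul_le_pow (a := (D : ℝ)⁻¹) (by linarith) D
    rw [mul_inv_cancel₀ (by positivity)] at this
    linarith
  calc (N : ℝ) < 2 ^ (Nat.log 2 N + 1) := by exact_mod_cast Nat.lt_pow_succ_log_self one_lt_two N
    _ ≤ _ := by rw [pow_mul]; gcongr

lemma typeI_error_le {S y L c u n : ℝ} (hy : 1 ≤ y) (hyS : y ^ 24 ≤ S) (hL : 1 ≤ L)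
    (hc : c ≤ S / y ^ 6)
    (hu₀ : 1 ≤ u) (hu : u ≤ y ^ 12) (hn₀ : 0 ≤ n) (hn : n ≤ L) :
    c * ((5 * u + 2 * u ^ 2) * n) ≤ 7 * L ^ 5 * S ^ 2 / y := by
  have : 0 < y := by positivity
  have S_nonneg : 0 ≤ S := le_trans (by positivity) hyS
  have y_pow_le : y ^ 19 ≤ S := (pow_le_pow_right₀ hy (by norm_num)).trans hyS
  calc c * ((5 * u + 2 * u ^ 2) * n) ≤ S / y ^ 6 * (7 * (y ^ 12) ^ 2 * L) := by
        gcongr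
        calc 5 * u + 2 * u ^ 2 ≤ 7 * u ^ 2 := by nlinarith
          _ ≤ 7 * (y ^ 12) ^ 2 := by gcongr
    _ = 7 * L * S * y ^ 19 / y := by field_simp
    _ ≤ 7 * L ^ 5 * S * S / y := by gcongr; exact le_self_pow₀ hL (by norm_num)
    _ = 7 * L ^ 5 * S ^ 2 / y := by ring

lemma typeII_error_le {S y L k n u G : ℝ} (hy : 1 ≤ y) (hyS : y ^ 24 ≤ S) (hL : 1 ≤ L)
    (hk : k ≤ 4 * y ^ 2 * L) (hn₀ : 0 ≤ n) (hn : n ≤ S ^ 2) {ℓ : ℝ} (hℓ₀ : 0 ≤ ℓ) (hℓ : ℓ ≤ L)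
    (hG₀ : 0 ≤ G) (hG : G ≤ 2 * S ^ 2 * L / y ^ 12) (hu : y ^ 12 / 2 ≤ u) :
    k * (√(ℓ ^ 5 * n * (n + 2 * G * n / u + G ^ 2)) / (S / y ^ 8)) ≤ 16 * L ^ 5 * S ^ 2 / y := by
  have : 0 < y := by positivity
  have S_pos : 0 < S := lt_of_lt_of_le (by positivity) hyS
  have u_pos : 0 < u := lt_of_lt_of_le (by positivity) hu
  have one_le_div_pow : 1 ≤ S ^ 2 / y ^ 24 := by
    rw [one_le_div₀ (by positivity)]
    exact hyS.trans (le_self_pow₀ ((one_le_pow₀ hy).trans hyS) two_ne_zero)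
  have factor_le : n + 2 * G * n / u + G ^ 2 ≤ 16 * (S ^ 4 * L ^ 2 / y ^ 24) := by
    calc n + 2 * G * n / u + G ^ 2
        ≤ S ^ 2 + 2 * (2 * S ^ 2 * L / y ^ 12) * S ^ 2 / (y ^ 12 / 2)
          + (2 * S ^ 2 * L / y ^ 12) ^ 2 := by gcongr
      _ = S ^ 2 * (1 * 1 + S ^ 2 / y ^ 24 * (8 * L + 4 * L ^ 2)) := by field_simp; ring
      _ ≤ S ^ 2 * (S ^ 2 / y ^ 24 * L ^ 2 + S ^ 2 / y ^ 24 * (8 * L ^ 2 + 4 * L ^ 2)) := by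
          gcongr
          exacts [one_le_pow₀ hL, le_self_pow₀ hL two_ne_zero]
      _ = 13 * (S ^ 4 * L ^ 2 / y ^ 24) := by ring
      _ ≤ 16 * (S ^ 4 * L ^ 2 / y ^ 24) := by gcongr; norm_num
  have sqrt_le : √(ℓ ^ 5 * n * (n + 2 * G * n / u + G ^ 2)) ≤ 4 * L ^ 4 * S ^ 3 / y ^ 12 := by
    refine Real.sqrt_le_iff.2 ⟨by positivity, ?_⟩
    calc ℓ ^ 5 * n * (n + 2 * G * n / u + G ^ 2)
        ≤ L ^ 5 * S ^ 2 * (16 * (S ^ 4 * L ^ 2 / y ^ 24)) := by gcongr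
      _ = L ^ 7 * (16 * S ^ 6 / y ^ 24) := by ring
      _ ≤ L ^ 8 * (16 * S ^ 6 / y ^ 24) := by gcongr; norm_num
      _ = (4 * L ^ 4 * S ^ 3 / y ^ 12) ^ 2 := by field_simp; ring
  calc _ ≤ 4 * y ^ 2 * L * (4 * L ^ 4 * S ^ 3 / y ^ 12 / (S / y ^ 8)) := by gcongr
    _ = 16 * L ^ 5 * S ^ 2 / y ^ 2 := by field_simp; ring
    _ ≤ 16 * L ^ 5 * S ^ 2 / y := by gcongr; exact le_self_pow₀ hy two_ne_zero

lemma edge_error_le {S y L n R m δ : ℝ} (hy : 1 ≤ y) (hyS : y ^ 24 ≤ S) (hL : 1 ≤ L)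
    (hR : R ≤ 3 * L) (hm₀ : 0 ≤ m) (hm : m ≤ L) (hδ : δ ≤ 1 / y ^ 2) (hn₀ : 0 ≤ n) (hn : n ≤ S ^ 2)
    {ℓ : ℝ} (hℓ₀ : 0 ≤ ℓ) (hℓ : ℓ ≤ L) :
    R * m * √((δ * n + 1) * (n * ℓ ^ 3)) ≤ 6 * L ^ 5 * S ^ 2 / y := by
  have : 0 < y := by positivity
  have S_pos : 0 < S := lt_of_lt_of_le (by positivity) hyS
  have sqrt_le : √((δ * n + 1) * (n * ℓ ^ 3)) ≤ 2 * L ^ 2 * S ^ 2 / y := by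
    refine Real.sqrt_le_iff.2 ⟨by positivity, ?_⟩
    have y_le : y ^ 2 ≤ S ^ 2 := by
      gcongr
      exact (le_self_pow₀ hy (by norm_num)).trans hyS
    have : 1 ≤ S ^ 2 / y ^ 2 := by rwa [one_le_div₀ (by positivity)]
    calc (δ * n + 1) * (n * ℓ ^ 3) ≤ (1 / y ^ 2 * S ^ 2 + S ^ 2 / y ^ 2) * (S ^ 2 * L ^ 3) := by
          gcongr
      _ = L ^ 3 * (2 * S ^ 4 / y ^ 2) := by ring
      _ ≤ L ^ 4 * (4 * S ^ 4 / y ^ 2) := by gcongr <;> norm_num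
      _ = (2 * L ^ 2 * S ^ 2 / y) ^ 2 := by ring
  calc _ ≤ 3 * L * L * (2 * L ^ 2 * S ^ 2 / y) := by gcongr
    _ = L ^ 4 * (6 * S ^ 2 / y) := by ring
    _ ≤ L ^ 5 * (6 * S ^ 2 / y) := by gcongr; norm_num
    _ = 6 * L ^ 5 * S ^ 2 / y := by ring

lemma natLog_two_add_one_le (N : ℕ) : (Nat.log 2 N + 1 : ℝ) ≤ 2 * (1 + Real.log N) := by
  have log_two_pos : 0 < Real.log 2 := Real.log_pos one_lt_two
  have log_nonneg := Real.log_natCast_nonneg N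
  calc (Nat.log 2 N + 1 : ℝ) ≤ Real.log N / Real.log 2 + 1 := by
        gcongr
        exact Real.natLog_le_logb N 2
    _ ≤ 2 * Real.log N + 1 := by
        gcongr
        rw [div_le_iff₀ log_two_pos]
        nlinarith [Real.log_two_gt_d9]
    _ ≤ 2 * (1 + Real.log N) := by linarith

lemma ceil_mul_natLog_add_one_le {x : ℝ} (hx : 1 ≤ x) (N : ℕ) :
    ((⌈x⌉₊ * (Nat.log 2 N + 1) : ℕ) : ℝ) ≤ 4 * x * (1 + Real.log N) := by
  calc ((⌈x⌉₊ * (Nat.log 2 N + 1) : ℕ) : ℝ) ≤ 2 * x * (2 * (1 + Real.log N)) := by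
        push_cast
        gcongr
        · exact Nat.ceil_le_two_mul (by linarith)
        · exact natLog_two_add_one_le N
    _ = 4 * x * (1 + Real.log N) := by ring

lemma log_natCast_le_log {n : ℕ} {x : ℝ} (hx : 1 ≤ x) (hn : n ≤ x) : Real.log n ≤ Real.log x := by
  rcases n.eq_zero_or_pos with rfl | n_pos
  · simpa using Real.log_nonneg hx
  · exact Real.log_le_log (Nat.cast_pos.2 n_pos) hn

lemma one_add_sq_mul_one_add_log_le {S y : ℝ} (hy : 1 ≤ y) (hyS : y ^ 24 ≤ S) {Q : ℕ}
    (hQ : Q ≤ S / y ^ 6) :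
    1 + Q ^ 2 * (1 + 2 * Real.log Q) ≤ 2 * S ^ 2 * (1 + Real.log (S ^ 2)) / y ^ 12 := by
  have : 0 < y := by positivity
  have S_ge : 1 ≤ S := (one_le_pow₀ hy).trans hyS
  have Q_le_S : (Q : ℝ) ≤ S := hQ.trans (div_le_self (by positivity) (one_le_pow₀ hy))
  have log_nonneg : 0 ≤ Real.log (S ^ 2) := Real.log_nonneg (one_le_pow₀ S_ge)
  have one_le : 1 ≤ (S / y ^ 6) ^ 2 := by
    refine one_le_pow₀ ((one_le_div₀ (by positivity)).2 ?_)
    exact (pow_le_pow_right₀ hy (by norm_num)).trans hyS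
  have log_le : 2 * Real.log Q ≤ Real.log (S ^ 2) := by
    rw [Real.log_pow]
    exact mul_le_mul_of_nonneg_left (log_natCast_le_log S_ge Q_le_S) zero_le_two
  calc 1 + Q ^ 2 * (1 + 2 * Real.log Q)
      ≤ (S / y ^ 6) ^ 2 * (1 + Real.log (S ^ 2))
        + (S / y ^ 6) ^ 2 * (1 + Real.log (S ^ 2)) := by
        gcongr
        exact one_le_mul_of_one_le_of_one_le one_le (le_add_of_nonneg_right log_nonneg)
    _ = _ := by ring

lemma sq_le_div_pow_eight_pow_three {S y : ℝ} (hy : 1 ≤ y) (hyS : y ^ 24 ≤ S) :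
    S ^ 2 ≤ (S / y ^ 8) ^ 3 := by
  rw [div_pow, ← pow_mul, le_div_iff₀ (by positivity), pow_succ S 2]
  gcongr

lemma card_le_of_forall_pos_le {P : Finset ℕ} {Q : ℕ} (hP : ∀ q ∈ P, 0 < q ∧ q ≤ Q) : #P ≤ Q := by
  simpa using card_le_card fun q hq ↦ mem_Ioc.2 (hP q hq)

/-- All moduli are large primes, so no Dirichlet character of small conductor intervenes and the
large sieve alone saves a power of `y`, without recourse to the Siegel–Walfisz theorem. -/
theorem sum_abs_discrepancy_vonMangoldt_le_div {P : Finset ℕ} {S y : ℝ} (hy : 1 ≤ y)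
    (hyS : y ^ 24 ≤ S) (hP : ∀ q ∈ P, q.Prime ∧ S / y ^ 8 ≤ q ∧ q ≤ S / y ^ 6) {N : ℕ}
    (hN : N ≤ S ^ 2) :
    ∑ q ∈ P, |discrepancy q N Λ| ≤ 29 * (1 + Real.log (S ^ 2)) ^ 5 * S ^ 2 / y := by
  have : 0 < y := by positivity
  have S_ge : 1 ≤ S := (one_le_pow₀ hy).trans hyS
  set L := 1 + Real.log (S ^ 2)
  have L_ge : 1 ≤ L := le_add_of_nonneg_right (Real.log_nonneg (one_le_pow₀ S_ge))
  have log_N_nonneg := Real.log_natCast_nonneg N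
  have log_N_le : 1 + Real.log N ≤ L :=
    add_le_add_right (log_natCast_le_log (one_le_pow₀ S_ge) hN) 1
  set Q := ⌊S / y ^ 6⌋₊
  have Q_le : Q ≤ S / y ^ 6 := Nat.floor_le (by positivity)
  have P_le : ∀ q ∈ P, q.Prime ∧ S / y ^ 8 ≤ q ∧ q ≤ Q := fun q hq ↦
    ⟨(hP q hq).1, (hP q hq).2.1, Nat.le_floor (hP q hq).2.2⟩
  have card_P_le : #P ≤ Q :=
    card_le_of_forall_pos_le fun q hq ↦ ⟨(P_le q hq).1.pos, (P_le q hq).2.2⟩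
  have log_Q_le : 1 + Real.log Q ≤ L := by
    refine add_le_add_right (log_natCast_le_log (one_le_pow₀ S_ge) (Q_le.trans ?_)) 1
    exact (div_le_self (by positivity) (one_le_pow₀ hy)).trans (le_self_pow₀ S_ge two_ne_zero)
  set U := ⌊y ^ 12⌋₊
  have U_pos : 0 < U := Nat.floor_pos.2 (one_le_pow₀ hy)
  set D := ⌈y ^ 2⌉₊
  have D_pos : 0 < D := Nat.ceil_pos.2 (by positivity)
  have K_le : ((D * (Nat.log 2 N + 1) : ℕ) : ℝ) ≤ 4 * y ^ 2 * L :=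
    (ceil_mul_natLog_add_one_le (one_le_pow₀ hy) N).trans (by gcongr)
  have type_I := typeI_error_le hy hyS L_ge ((Nat.cast_le.2 card_P_le).trans Q_le)
    (Nat.one_le_cast.2 U_pos) (Nat.floor_le (by positivity)) log_N_nonneg
    (by linarith)
  have type_II := typeII_error_le hy hyS L_ge K_le N.cast_nonneg hN (by positivity) log_N_le
    (by positivity) (one_add_sq_mul_one_add_log_le hy hyS Q_le)
    (Nat.div_two_lt_floor (one_le_pow₀ hy)).le
  have D_inv_le : 1 + (D : ℝ)⁻¹ - 1 ≤ 1 / y ^ 2 := by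
    rw [add_sub_cancel_left, ← one_div]
    exact one_div_le_one_div_of_le (by positivity) (Nat.le_ceil _)
  have edge := edge_error_le (R := 3 + Real.log Q) hy hyS L_ge (by linarith) log_N_nonneg
    (by linarith) D_inv_le N.cast_nonneg hN (by positivity) log_N_le
  refine (sum_abs_discrepancy_vonMangoldt_le (by positivity) P_le le_rfl
    (hN.trans (sq_le_div_pow_eight_pow_three hy hyS)) U_pos
    (lt_add_of_pos_right 1 (by positivity)) (natCast_lt_one_add_inv_pow N D_pos)).trans ?_
  calc _ ≤ _ := add_le_add_three type_I type_II edge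
    _ = _ := by ring

end MeanValue

section DetectingPrimes

open Finset ArithmeticFunction Chebyshev

lemma sum_filter_dvd_vonMangoldt_le {q : ℕ} (hq : q.Prime) (N : ℕ) :
    ∑ n ∈ Ioc 0 N with q ∣ n, Λ n ≤ Real.log N := by
  rcases N.eq_zero_or_pos with rfl | N_pos
  · simp
  have subset : {n ∈ Ioc 0 N | q ∣ n ∧ IsPrimePow n} ⊆ (q ^ Nat.log q N).divisors := by
    intro n hn
    obtain ⟨n_mem, q_dvd, p, k, hp, -, rfl⟩ := mem_filter.1 hn
    obtain rfl : q = p := (Nat.prime_dvd_prime_iff_eq hq hp.nat_prime).1 (hq.dvd_of_dvd_pow q_dvd)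
    refine Nat.mem_divisors.2 ⟨pow_dvd_pow q ?_, pow_ne_zero _ hq.ne_zero⟩
    exact Nat.le_log_of_pow_le hq.one_lt (mem_Ioc.1 n_mem).2
  calc ∑ n ∈ Ioc 0 N with q ∣ n, Λ n = ∑ n ∈ Ioc 0 N with q ∣ n ∧ IsPrimePow n, Λ n := by
        rw [← filter_filter, sum_filter_of_ne fun n _ h ↦ vonMangoldt_ne_zero_iff.1 h]
    _ ≤ ∑ n ∈ (q ^ Nat.log q N).divisors, Λ n :=
        sum_le_sum_of_subset_of_nonneg subset fun _ _ _ ↦ vonMangoldt_nonneg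
    _ = Real.log ((q ^ Nat.log q N : ℕ) : ℝ) := vonMangoldt_sum
    _ ≤ Real.log N := by
        gcongr
        · exact Nat.cast_pos.2 (pow_pos hq.pos _)
        · exact Nat.pow_log_le_self q N_pos.ne'

lemma psi_natCast (N : ℕ) : ψ N = ∑ n ∈ Ioc 0 N, Λ n := by
  rw [psi, Nat.floor_natCast]

lemma discrepancy_eq_sub {q : ℕ} (hq : q.Prime) (N : ℕ) (f : ArithmeticFunction ℝ) :
    discrepancy q N f = ∑ n ∈ Ioc 0 N with ((n : ℕ) : ZMod q) = 1, f n
      - (q.totient : ℝ)⁻¹ * ∑ n ∈ Ioc 0 N with ¬ q ∣ n, f n := by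
  rw [discrepancy, sum_filter, sum_filter, mul_sum, ← sum_sub_distrib]
  refine sum_congr rfl fun n _ ↦ ?_
  have isUnit_iff : IsUnit (n : ZMod q) ↔ ¬ q ∣ n := by
    rw [ZMod.isUnit_iff_coprime, Nat.coprime_comm, hq.coprime_iff_not_dvd]
  simp only [discrepancyWeight, isUnit_iff]
  split_ifs <;> ring

lemma psi_sub_log_mul_inv_le {q : ℕ} (hq : q.Prime) (N : ℕ) :
    (ψ N - Real.log N) * (q : ℝ)⁻¹
      ≤ |discrepancy q N Λ| + ∑ n ∈ Ioc 0 N with ((n : ℕ) : ZMod q) = 1, Λ n := by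
  have totient_pos : (0 : ℝ) < q.totient := Nat.cast_pos.2 (Nat.totient_pos.2 hq.pos)
  have psi_sub_le : ψ N - Real.log N ≤ ∑ n ∈ Ioc 0 N with ¬ q ∣ n, Λ n := by
    rw [psi_natCast, ← sum_filter_add_sum_filter_not _ (q ∣ ·)]
    linarith [sum_filter_dvd_vonMangoldt_le hq N]
  have : 0 ≤ ∑ n ∈ Ioc 0 N with ¬ q ∣ n, Λ n := sum_nonneg fun _ _ ↦ vonMangoldt_nonneg
  calc (ψ N - Real.log N) * (q : ℝ)⁻¹
      ≤ (∑ n ∈ Ioc 0 N with ¬ q ∣ n, Λ n) * (q.totient : ℝ)⁻¹ := by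
        gcongr
        exact Nat.totient_le q
    _ ≤ _ := by linarith [neg_abs_le (discrepancy q N Λ), discrepancy_eq_sub hq N Λ]

/-- The primes `p ≤ N` that are congruent to `1` modulo some member of `P`. -/
def primesCongrOne (P : Finset ℕ) (N : ℕ) : Finset ℕ :=
  {p ∈ Ioc 0 N | p.Prime ∧ ∃ q ∈ P, q ∣ p - 1}

lemma sum_sum_filter_vonMangoldt_le {P : Finset ℕ} {Q₀ : ℝ} (hQ₀ : 0 ≤ Q₀)
    (hP : ∀ q ∈ P, q.Prime ∧ Q₀ ≤ q) {N k : ℕ} (hN : N ≤ Q₀ ^ (k + 1)) :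
    ∑ q ∈ P, ∑ n ∈ Ioc 0 N with ((n : ℕ) : ZMod q) = 1, Λ n
      ≤ k * (Real.log N * #(primesCongrOne P N) + (ψ N - θ N)) := by
  have card_mul_le : ∀ n ∈ Ioc 0 N, #{q ∈ P | (n : ZMod q) = 1} * Λ n
      ≤ k * ((if n.Prime ∧ ∃ q ∈ P, q ∣ n - 1 then Real.log N else 0)
        + if ¬ n.Prime then Λ n else 0) := by
    intro n n_mem
    have ⟨n_pos, n_le⟩ := mem_Ioc.1 n_mem
    obtain rfl | one_lt := Nat.eq_or_lt_of_le n_pos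
    · simp [Nat.not_prime_one]
    have card_le := card_filter_natCast_eq_one_le hQ₀ hP one_lt ((Nat.cast_le.2 n_le).trans hN)
    by_cases n_prime : n.Prime
    · by_cases! h : ∃ q ∈ P, q ∣ n - 1
      · rw [if_pos ⟨n_prime, h⟩, if_neg (not_not.2 n_prime), add_zero]
        gcongr
        exact vonMangoldt_le_log.trans (by gcongr)
      · have : {q ∈ P | (n : ZMod q) = 1} = ∅ := filter_eq_empty_iff.2 fun q hq ↦
          mt (natCast_eq_one_iff_dvd_sub_one n_pos q).1 (h q hq)
        rw [this, card_empty, Nat.cast_zero, zero_mul]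
        positivity
    · rw [if_neg fun h ↦ n_prime h.1, if_pos n_prime, zero_add]
      gcongr
  calc ∑ q ∈ P, ∑ n ∈ Ioc 0 N with ((n : ℕ) : ZMod q) = 1, Λ n
      = ∑ n ∈ Ioc 0 N, #{q ∈ P | (n : ZMod q) = 1} * Λ n := by
        simp only [sum_filter]
        rw [sum_comm]
        simp only [← sum_filter, sum_const, nsmul_eq_mul]
    _ ≤ _ := sum_le_sum card_mul_le
    _ = _ := by
        rw [← mul_sum, sum_add_distrib, ← sum_filter, ← sum_filter, sum_const, nsmul_eq_mul,
          mul_comm (Real.log N), psi_sub_theta_eq_sum_not_prime, Nat.floor_natCast]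
        rfl

theorem psi_sub_log_mul_sum_inv_le {P : Finset ℕ} {Q₀ : ℝ} (hQ₀ : 0 ≤ Q₀)
    (hP : ∀ q ∈ P, q.Prime ∧ Q₀ ≤ q) {N k : ℕ} (hN : N ≤ Q₀ ^ (k + 1)) :
    (ψ N - Real.log N) * ∑ q ∈ P, (q : ℝ)⁻¹
      ≤ ∑ q ∈ P, |discrepancy q N Λ|
        + k * (Real.log N * #(primesCongrOne P N) + (ψ N - θ N)) := by
  calc _ ≤ ∑ q ∈ P, (|discrepancy q N Λ| + ∑ n ∈ Ioc 0 N with ((n : ℕ) : ZMod q) = 1, Λ n) := by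
        rw [mul_sum]
        exact sum_le_sum fun q hq ↦ psi_sub_log_mul_inv_le (hP q hq).1 N
    _ ≤ _ := by
        rw [sum_add_distrib]
        gcongr
        exact sum_sum_filter_vonMangoldt_le hQ₀ hP hN

end DetectingPrimes

section ReciprocalSums

open Finset Filter Chebyshev

lemma eventually_one_add_log_pow_le (k : ℕ) {r ε : ℝ} (hr : 0 < r) (hε : 0 < ε) :
    ∀ᶠ x : ℝ in atTop, (1 + Real.log x) ^ k ≤ ε * x ^ r := by
  have log_isLittleO := isLittleO_log_rpow_rpow_atTop k hr
  filter_upwards [log_isLittleO.bound (c := ε / 2 ^ k) (by positivity),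
    Real.tendsto_log_atTop.eventually_ge_atTop 1, eventually_ge_atTop 0] with x hx one_le x_nonneg
  rw [Real.rpow_natCast, Real.norm_of_nonneg (by positivity),
    Real.norm_of_nonneg (by positivity)] at hx
  calc (1 + Real.log x) ^ k ≤ (2 * Real.log x) ^ k := by gcongr; linarith
    _ = 2 ^ k * Real.log x ^ k := mul_pow ..
    _ ≤ 2 ^ k * (ε / 2 ^ k * x ^ r) := by gcongr
    _ = ε * x ^ r := by field_simp

lemma eventually_sqrt_mul_one_add_log_le {ε : ℝ} (hε : 0 < ε) :
    ∀ᶠ x : ℝ in atTop, √x * (1 + Real.log x) ≤ ε * x := by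
  filter_upwards [eventually_one_add_log_pow_le 1 one_half_pos hε, eventually_ge_atTop 0]
    with x hx x_nonneg
  rw [pow_one, ← Real.sqrt_eq_rpow] at hx
  calc √x * (1 + Real.log x) ≤ √x * (ε * √x) := by gcongr
    _ = ε * x := by rw [mul_left_comm, Real.mul_self_sqrt x_nonneg]

lemma eventually_mul_le_theta {c : ℝ} (hc : c < Real.log 2) : ∀ᶠ x : ℝ in atTop, c * x ≤ θ x := by
  have ε_pos : 0 < (Real.log 2 - c) / 4 := by linarith
  filter_upwards [eventually_sqrt_mul_one_add_log_le ε_pos, eventually_ge_atTop 2] with x hx two_le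
  have log_add_two_le : Real.log (x + 2) ≤ Real.log x + Real.log 2 := by
    rw [← Real.log_mul (by positivity) two_ne_zero]
    exact Real.log_le_log (by positivity) (by linarith)
  have one_le : 1 ≤ x := one_le_two.trans two_le
  have log_nonneg : 0 ≤ Real.log x := Real.log_nonneg one_le
  have one_add_log_le : 1 + Real.log x ≤ √x * (1 + Real.log x) :=
    le_mul_of_one_le_left (by positivity) (Real.one_le_sqrt.2 one_le)
  linarith [theta_ge' one_le, Real.log_two_lt_d9, Real.sqrt_nonneg x]

lemma eventually_le_theta_four_mul_sub_theta : ∀ᶠ x : ℝ in atTop, x ≤ θ (4 * x) - θ x := by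
  have tendsto_four_mul : Tendsto (fun x : ℝ ↦ 4 * x) atTop atTop :=
    tendsto_id.const_mul_atTop four_pos
  have log_two_gt : 0.65 < Real.log 2 := by linarith [Real.log_two_gt_d9]
  filter_upwards [tendsto_four_mul.eventually (eventually_mul_le_theta log_two_gt),
    eventually_ge_atTop 0] with x theta_ge x_nonneg
  have theta_le := theta_le_log4_mul_x x_nonneg
  rw [Real.log_four_eq] at theta_le
  nlinarith [Real.log_two_lt_d9]

/-- The primes `p` with `a < p ≤ b`. -/
noncomputable def primesIoc (a b : ℝ) : Finset ℕ :=
  {p ∈ Ioc ⌊a⌋₊ ⌊b⌋₊ | p.Prime}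

lemma mem_primesIoc {a b : ℝ} (ha : 0 ≤ a) (hb : 0 ≤ b) {p : ℕ} :
    p ∈ primesIoc a b ↔ p.Prime ∧ a < p ∧ p ≤ b := by
  rw [primesIoc, mem_filter, mem_Ioc, Nat.floor_lt ha, Nat.le_floor_iff hb, and_comm]

lemma sum_primesIoc_add_sum_primesIoc {a b c : ℝ} (hab : a ≤ b) (hbc : b ≤ c) (f : ℕ → ℝ) :
    ∑ p ∈ primesIoc a b, f p + ∑ p ∈ primesIoc b c, f p = ∑ p ∈ primesIoc a c, f p := by
  simp only [primesIoc, sum_filter]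
  exact sum_Ioc_consecutive _ (Nat.floor_mono hab) (Nat.floor_mono hbc)

lemma primesIoc_subset_primesIoc_right (a : ℝ) {b c : ℝ} (hbc : b ≤ c) :
    primesIoc a b ⊆ primesIoc a c :=
  filter_subset_filter _ (Ioc_subset_Ioc_right (Nat.floor_mono hbc))

lemma theta_sub_theta {x z : ℝ} (hxz : x ≤ z) :
    θ z - θ x = ∑ p ∈ primesIoc x z, Real.log p := by
  simp only [theta, primesIoc, sum_filter]
  rw [← sum_Ioc_consecutive _ (Nat.zero_le _) (Nat.floor_mono hxz), add_sub_cancel_left]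

lemma theta_sub_theta_le {x z : ℝ} (hx : 0 ≤ x) (hxz : x ≤ z) :
    θ z - θ x ≤ z * Real.log z * ∑ p ∈ primesIoc x z, (p : ℝ)⁻¹ := by
  rw [theta_sub_theta hxz, mul_sum]
  refine sum_le_sum fun p hp ↦ ?_
  have z_nonneg : 0 ≤ z := hx.trans hxz
  obtain ⟨p_prime, -, p_le⟩ := (mem_primesIoc hx z_nonneg).1 hp
  have p_pos : (0 : ℝ) < p := Nat.cast_pos.2 p_prime.pos
  rw [← div_eq_mul_inv, le_div_iff₀ p_pos, mul_comm]
  gcongr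

lemma div_four_mul_log_le_sum_inv {x : ℝ} (hx : 1 ≤ x)
    (h : ∀ w ≥ x, w ≤ θ (4 * w) - θ w) (J : ℕ) {L : ℝ} (hL : Real.log (4 ^ J * x) ≤ L) :
    J / (4 * L) ≤ ∑ p ∈ primesIoc x (4 ^ J * x), (p : ℝ)⁻¹ := by
  induction J with
  | zero =>
    rw [Nat.cast_zero, zero_div]
    positivity
  | succ J ih =>
    set w := 4 ^ J * x
    have w_ge : x ≤ w := le_mul_of_one_le_left (by positivity) (one_le_pow₀ (by norm_num))
    have w_pos : 0 < w := by linarith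
    have four_pow_succ : 4 ^ (J + 1) * x = 4 * w := by ring
    rw [four_pow_succ] at hL ⊢
    have L_pos : 0 < L := (Real.log_pos (by linarith)).trans_le hL
    have scale_le : 1 / (4 * L) ≤ ∑ p ∈ primesIoc w (4 * w), (p : ℝ)⁻¹ := by
      rw [div_le_iff₀ (by positivity)]
      refine le_of_mul_le_mul_left ?_ w_pos
      calc w * 1 ≤ 4 * w * Real.log (4 * w) * ∑ p ∈ primesIoc w (4 * w), (p : ℝ)⁻¹ := by
            rw [mul_one]
            exact (h w w_ge).trans (theta_sub_theta_le w_pos.le (by linarith))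
        _ ≤ 4 * w * L * ∑ p ∈ primesIoc w (4 * w), (p : ℝ)⁻¹ := by gcongr
        _ = _ := by ring
    rw [← sum_primesIoc_add_sum_primesIoc w_ge (by linarith : w ≤ 4 * w), Nat.cast_succ, add_div]
    exact add_le_add (ih ((Real.log_le_log w_pos (by linarith)).trans hL)) scale_le

/-- A weak form of Mertens' theorem, which gives `log (log z / log x) + o(1)` for the sum. -/
theorem eventually_log_div_le_sum_inv : ∀ᶠ x : ℝ in atTop, ∀ z ≥ 4 * x,
    Real.log (z / x) / (12 * Real.log z) ≤ ∑ p ∈ primesIoc x z, (p : ℝ)⁻¹ := by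
  filter_upwards [eventually_forall_ge_atTop.2 eventually_le_theta_four_mul_sub_theta,
    eventually_ge_atTop 1] with x hx one_le z hz
  have x_pos : 0 < x := by linarith
  have z_pos : 0 < z := by linarith
  have log_four_pos : 0 < Real.log 4 := Real.log_pos (by norm_num)
  have log_z_pos : 0 < Real.log z := Real.log_pos (by linarith)
  have one_le_ratio : 1 ≤ Real.log (z / x) / Real.log 4 := by
    rw [one_le_div log_four_pos]
    exact Real.log_le_log four_pos ((le_div_iff₀ x_pos).2 hz)
  set J := ⌊Real.log (z / x) / Real.log 4⌋₊
  have pow_mul_le : 4 ^ J * x ≤ z := by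
    rw [← le_div_iff₀ x_pos, ← Real.log_le_log_iff (by positivity) (by positivity), Real.log_pow,
      ← le_div_iff₀ log_four_pos]
    exact Nat.floor_le (by linarith)
  calc Real.log (z / x) / (12 * Real.log z)
      ≤ Real.log (z / x) / (8 * Real.log 4 * Real.log z) := by
        gcongr
        · exact Real.log_nonneg ((one_le_div x_pos).2 (by linarith))
        · linarith [Real.log_two_lt_d9, Real.log_four_eq]
    _ = Real.log (z / x) / Real.log 4 / 2 / (4 * Real.log z) := by
        field_simp
        ring
    _ ≤ J / (4 * Real.log z) := by
        gcongr
        exact (Nat.div_two_lt_floor one_le_ratio).le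
    _ ≤ ∑ p ∈ primesIoc x (4 ^ J * x), (p : ℝ)⁻¹ :=
        div_four_mul_log_le_sum_inv one_le hx J (Real.log_le_log (by positivity) pow_mul_le)
    _ ≤ _ := sum_le_sum_of_subset_of_nonneg (primesIoc_subset_primesIoc_right x pow_mul_le)
        fun _ _ _ ↦ by positivity

end ReciprocalSums

section Count

open Finset Filter Chebyshev ArithmeticFunction

lemma eventually_div_le_sum_inv_primesIoc_rpow {α β : ℝ} (hα : 0 < α) (hαβ : α < β) :
    ∀ᶠ T : ℝ in atTop, (β - α) / (12 * β) ≤ ∑ p ∈ primesIoc (T ^ α) (T ^ β), (p : ℝ)⁻¹ := by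
  filter_upwards [(tendsto_rpow_atTop hα).eventually eventually_log_div_le_sum_inv,
    (tendsto_rpow_atTop (sub_pos.2 hαβ)).eventually_ge_atTop 4, eventually_gt_atTop 1]
    with T hT four_le one_lt
  have T_pos : 0 < T := by positivity
  have log_pos : 0 < Real.log T := Real.log_pos one_lt
  have window : 4 * T ^ α ≤ T ^ β := by
    rwa [← le_div_iff₀ (by positivity), ← Real.rpow_sub T_pos]
  refine le_of_eq_of_le ?_ (hT _ window)
  rw [← Real.rpow_sub T_pos, Real.log_rpow T_pos, Real.log_rpow T_pos]
  field_simp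

lemma eventually_half_le_psi_sub_log : ∀ᶠ T : ℝ in atTop, T / 2 ≤ ψ T - Real.log T := by
  have log_two_gt : 0.6 < Real.log 2 := by linarith [Real.log_two_gt_d9]
  filter_upwards [eventually_mul_le_theta log_two_gt,
    eventually_one_add_log_pow_le 1 one_pos (by norm_num : (0 : ℝ) < 0.1)] with T theta_ge log_le
  rw [pow_one, Real.rpow_one] at log_le
  linarith [theta_le_psi T]

lemma psi_sub_log_mul_sum_inv_le_of_window {P : Finset ℕ} {T y : ℝ} (hy : 1 ≤ y)
    (hyT : y ^ 24 ≤ √T) (hP : ∀ q ∈ P, q.Prime ∧ √T / y ^ 8 ≤ q ∧ q ≤ √T / y ^ 6) :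
    (ψ T - Real.log T) * ∑ q ∈ P, (q : ℝ)⁻¹
      ≤ 29 * (1 + Real.log T) ^ 5 * T / y
        + 2 * (Real.log T * #(primesCongrOne P ⌊T⌋₊) + 2 * √T * Real.log T) := by
  have T_ge : 1 ≤ T := Real.one_le_sqrt.1 ((one_le_pow₀ hy).trans hyT)
  have sq_sqrt : √T ^ 2 = T := Real.sq_sqrt (by linarith)
  have floor_le : (⌊T⌋₊ : ℝ) ≤ T := Nat.floor_le (by linarith)
  have log_floor_le : Real.log ⌊T⌋₊ ≤ Real.log T := log_natCast_le_log T_ge floor_le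
  have mean_value := sum_abs_discrepancy_vonMangoldt_le_div hy hyT hP (floor_le.trans sq_sqrt.ge)
  have floor_le_cube : ⌊T⌋₊ ≤ (√T / y ^ 8) ^ (2 + 1) :=
    (floor_le.trans sq_sqrt.ge).trans (sq_le_div_pow_eight_pow_three hy hyT)
  have detection := psi_sub_log_mul_sum_inv_le (by positivity)
    (fun q hq ↦ ⟨(hP q hq).1, (hP q hq).2.1⟩) floor_le_cube
  rw [← psi_eq_psi_coe_floor, ← theta_eq_theta_coe_floor] at detection
  rw [sq_sqrt] at mean_value
  calc _ ≤ (ψ T - Real.log ⌊T⌋₊) * ∑ q ∈ P, (q : ℝ)⁻¹ := by gcongr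
    _ ≤ _ := detection
    _ ≤ _ := by
        refine add_le_add mean_value (mul_le_mul_of_nonneg_left ?_ zero_le_two)
        exact add_le_add (by gcongr) (psi_sub_theta_le T_ge)

lemma sqrt_div_rpow_pow {T : ℝ} (hT : 0 < T) (δ : ℝ) (k : ℕ) :
    √T / (T ^ δ) ^ k = T ^ (1 / 2 - k * δ) := by
  rw [← Real.rpow_mul_natCast hT.le, Real.sqrt_eq_rpow, ← Real.rpow_sub hT, mul_comm]

theorem eventually_lt_card_primesCongrOne {δ : ℝ} (hδ : 0 < δ) (hδ' : δ ≤ 1 / 48) :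
    ∀ᶠ T : ℝ in atTop, 3 / 50 * δ * T / Real.log T
      < #(primesCongrOne (primesIoc (T ^ (1 / 2 - 8 * δ)) (T ^ (1 / 2 - 6 * δ))) ⌊T⌋₊) := by
  filter_upwards [eventually_gt_atTop 1, eventually_half_le_psi_sub_log,
    eventually_div_le_sum_inv_primesIoc_rpow (by linarith : 0 < 1 / 2 - 8 * δ)
      (by linarith : 1 / 2 - 8 * δ < 1 / 2 - 6 * δ),
    eventually_one_add_log_pow_le 5 hδ (by positivity : 0 < δ / 100 / 29),
    eventually_sqrt_mul_one_add_log_le (by positivity : 0 < δ / 400)]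
    with T one_lt psi_sub_log_ge sum_inv_ge log_pow_le sqrt_mul_le
  have T_pos : 0 < T := by linarith
  have log_pos : 0 < Real.log T := Real.log_pos one_lt
  set P := primesIoc (T ^ (1 / 2 - 8 * δ)) (T ^ (1 / 2 - 6 * δ))
  have y_pow_le : (T ^ δ) ^ 24 ≤ √T := by
    rw [← Real.rpow_mul_natCast T_pos.le, Real.sqrt_eq_rpow]
    exact Real.rpow_le_rpow_of_exponent_le one_lt.le (by push_cast; linarith)
  have hP : ∀ q ∈ P, q.Prime ∧ √T / (T ^ δ) ^ 8 ≤ q ∧ q ≤ √T / (T ^ δ) ^ 6 := by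
    intro q hq
    obtain ⟨q_prime, lt_q, q_le⟩ := (mem_primesIoc (by positivity) (by positivity)).1 hq
    rw [sqrt_div_rpow_pow T_pos, sqrt_div_rpow_pow T_pos]
    push_cast
    exact ⟨q_prime, lt_q.le, q_le⟩
  have reciprocals_ge : δ / 3 ≤ ∑ q ∈ P, (q : ℝ)⁻¹ := by
    refine le_trans ?_ sum_inv_ge
    rw [div_le_div_iff₀ (by norm_num) (by linarith)]
    nlinarith
  have mean_value_error_le : 29 * (1 + Real.log T) ^ 5 * T / T ^ δ ≤ δ / 100 * T := by
    rw [div_le_iff₀ (by positivity)]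
    calc 29 * (1 + Real.log T) ^ 5 * T ≤ 29 * (δ / 100 / 29 * T ^ δ) * T := by gcongr
      _ = δ / 100 * T * T ^ δ := by ring
  have detection := psi_sub_log_mul_sum_inv_le_of_window
    (Real.one_le_rpow one_lt.le hδ.le) y_pow_le hP
  have main_term_ge : T / 2 * (δ / 3) ≤ (ψ T - Real.log T) * ∑ q ∈ P, (q : ℝ)⁻¹ :=
    mul_le_mul psi_sub_log_ge reciprocals_ge (by positivity) (by linarith)
  rw [div_lt_iff₀ log_pos]
  linarith [Real.sqrt_nonneg T, mul_pos hδ T_pos]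

lemma card_primesCongrOne_le_natCard {P : Finset ℕ} {N : ℕ} {T a b : ℝ} (hN : N ≤ T)
    (hP : ∀ q ∈ P, q.Prime ∧ a ≤ q ∧ q ≤ b) :
    #(primesCongrOne P N) ≤ Nat.card {p : ℕ // p.Prime ∧ (p : ℝ) ≤ T ∧
      ∃ q : ℕ, q.Prime ∧ q ∣ (p - 1) ∧ a ≤ (q : ℝ) ∧ (q : ℝ) ≤ b} := by
  rw [← Set.ncard_coe_finset]
  refine Set.ncard_le_ncard ?_ ((Set.finite_Iic ⌊T⌋₊).subset fun p hp ↦ Nat.le_floor hp.2.1)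
  intro p hp
  obtain ⟨p_mem, p_prime, q, q_mem, q_dvd⟩ := mem_filter.1 (mem_coe.1 hp)
  exact ⟨p_prime, (Nat.cast_le.2 (mem_Ioc.1 p_mem).2).trans hN, q, (hP q q_mem).1, q_dvd,
    (hP q q_mem).2⟩

end Count

/-- Lemma 3.1: There is an absolute constant `c > 0` such that for every sufficiently small
`η > 0` and every sufficiently large `T`, the number of primes `p ≤ T` such that `p - 1` has
a prime divisor in `[T^(1/2-η), T^(1/2-η/2)]` exceeds `c·η·T/log T`. -/
theorem primes_with_prime_divisor_in_interval :
    ∃ c : ℝ, 0 < c ∧ ∃ η₀ : ℝ, 0 < η₀ ∧ ∀ η : ℝ, 0 < η → η < η₀ →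
      ∃ T₀ : ℝ, ∀ T : ℝ, T ≥ T₀ →
        (Nat.card {p : ℕ // p.Prime ∧ (p : ℝ) ≤ T ∧
            ∃ q : ℕ, q.Prime ∧ q ∣ (p - 1) ∧
              T ^ ((1 : ℝ) / 2 - η) ≤ (q : ℝ) ∧ (q : ℝ) ≤ T ^ ((1 : ℝ) / 2 - η / 2)} : ℝ) >
          c * η * T / Real.log T := by
  refine ⟨1 / 200, by norm_num, 1 / 4, by norm_num, fun η hη hη' ↦ Filter.eventually_atTop.1 ?_⟩
  filter_upwards [eventually_lt_card_primesCongrOne (δ := η / 12) (by linarith) (by linarith),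
    Filter.eventually_ge_atTop 1] with T lt_card one_le
  have window_subset : ∀ q ∈ primesIoc (T ^ (1 / 2 - 8 * (η / 12))) (T ^ (1 / 2 - 6 * (η / 12))),
      q.Prime ∧ T ^ (1 / 2 - η) ≤ q ∧ q ≤ T ^ (1 / 2 - η / 2) := by
    intro q hq
    obtain ⟨q_prime, lt_q, q_le⟩ := (mem_primesIoc (by positivity) (by positivity)).1 hq
    refine ⟨q_prime, le_trans ?_ lt_q.le, q_le.trans ?_⟩ <;>
      exact Real.rpow_le_rpow_of_exponent_le one_le (by linarith)
  calc 1 / 200 * η * T / Real.log T = 3 / 50 * (η / 12) * T / Real.log T := by ring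
    _ < _ := lt_card
    _ ≤ _ := Nat.cast_le.2
      (card_primesCongrOne_le_natCard (Nat.floor_le (by positivity)) window_subset)
end

section
/- There is an absolute constant c > 0 such that for every sufficiently large positive integer r and every z ∈ ℂ with z ≠ 0, there exists a subset E ⊆ {1, 2, …, r} with |E| > c·log r such that 1 + s·z ≠ 0 for all s ∈ E and the complex numbers {1 + s·z : s ∈ E} are multiplicatively independent. -/
/-!
Over a number field, the logarithms of the absolute values embed the multiplicative group into `ℓ¹`
with norm twice the logarithmic height. If at most `k` of the numbers `1 + s * z` are independent,
their images lie in a `k`-dimensional subspace, where any two of them are at distance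
`O(h(z) + log r)`. By packing, a proportion at least `C⁻ᵏ` of them lie in a ball whose radius is
smaller by a fixed factor, so that their ratios have small height. Eliminating `z` between two of
them bounds `h(z)` by `O(log r)`, and eliminating `z` among three shows that the rational numbers
`(s - t) / (m - t)` have height at most a small power of `r`. There are few such rationals, so
`C ^ k` exceeds a fixed power of `r`.

If `z` is transcendental, the `1 + s * z` are images of pairwise coprime polynomials.
-/

section

open Finset Height NumberField Real
open scoped NNReal

/-! ### Multiplicative independence -/

/-- The family `a` is multiplicatively independent on `E`: its members there are nonzero and satisfy
no nontrivial multiplicative relation with integer exponents. Only the values of `a` and of the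
exponents on `E` matter, so both are total functions. -/
def MultIndepOn {ι F : Type*} [CommGroupWithZero F] (a : ι → F) (E : Finset ι) : Prop :=
  (∀ i ∈ E, a i ≠ 0) ∧ ∀ n : ι → ℤ, ∏ i ∈ E, a i ^ n i = 1 → ∀ i ∈ E, n i = 0

theorem multIndepOn_units_iff_linearIndepOn {ι F : Type*} [CommGroupWithZero F] {u : ι → Fˣ}
    {E : Finset ι} :
    MultIndepOn (fun i ↦ (u i : F)) E ↔ LinearIndepOn ℤ (fun i ↦ Additive.ofMul (u i)) E := by
  have prod_eq_one_iff (n : ι → ℤ) :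
      ∏ i ∈ E, (u i : F) ^ n i = 1 ↔ ∑ i ∈ E, n i • Additive.ofMul (u i) = 0 := by
    rw [← toMul_eq_one, ← Units.val_inj]
    simp
  simp [MultIndepOn, linearIndepOn_finset_iff, prod_eq_one_iff]

theorem MultIndepOn.of_comp_embedding {ι ι' F : Type*} [CommGroupWithZero F] {a : ι' → F}
    {e : ι ↪ ι'} {E : Finset ι} (h : MultIndepOn (a ∘ e) E) : MultIndepOn a (E.map e) := by
  simp only [MultIndepOn, forall_mem_map, prod_map]
  exact ⟨h.1, fun n hn ↦ h.2 (n ∘ e) hn⟩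

theorem MultIndepOn.map {ι F F' Φ : Type*} [CommGroupWithZero F] [CommGroupWithZero F']
    [FunLike Φ F F'] [MonoidWithZeroHomClass Φ F F'] {φ : Φ} (hφ : Function.Injective φ)
    {a : ι → F} {E : Finset ι} (h : MultIndepOn a E) : MultIndepOn (φ ∘ a) E :=
  ⟨fun i hi ↦ (map_ne_zero φ).2 (h.1 i hi), fun n hn ↦ h.2 n (hφ (by simpa using hn))⟩

theorem multIndepOn_map_of_pairwise_isCoprime {ι R F : Type*} [CommRing R] [Field F] {φ : R →+* F}
    (hφ : Function.Injective φ) {p : ι → R} {E : Finset ι} (h0 : ∀ i ∈ E, p i ≠ 0)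
    (hunit : ∀ i ∈ E, ¬ IsUnit (p i))
    (hcop : (E : Set ι).Pairwise fun i j ↦ IsCoprime (p i) (p j)) :
    MultIndepOn (φ ∘ p) E := by
  have hne : ∀ i ∈ E, φ (p i) ≠ 0 := fun i hi ↦ (map_ne_zero_iff φ hφ).2 (h0 i hi)
  have exponent_nonpos (n : ι → ℤ) (hn : ∏ i ∈ E, φ (p i) ^ n i = 1) : ∀ i ∈ E, n i ≤ 0 := by
    intro i hi
    by_contra! hpos
    have hprod : ∏ j ∈ E, p j ^ (n j).toNat = ∏ j ∈ E, p j ^ (-n j).toNat := by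
      refine hφ (div_eq_one_iff_eq ?_ |>.1 ?_)
      · simpa [prod_eq_zero_iff] using fun j hj h ↦ absurd h (hne j hj)
      · simp only [map_prod, map_pow, ← prod_div_distrib]
        rw [← hn]
        refine prod_congr rfl fun j hj ↦ ?_
        rw [← zpow_natCast, ← zpow_natCast, ← zpow_sub₀ (hne j hj), Int.toNat_sub_toNat_neg]
    have hdvd : p i ∣ ∏ j ∈ E, p j ^ (-n j).toNat :=
      hprod ▸ (dvd_pow_self _ (by lia)).trans (dvd_prod_of_mem _ hi)
    refine hunit i hi (IsCoprime.isUnit_of_dvd' (IsCoprime.prod_right fun j hj ↦ ?_) dvd_rfl hdvd)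
    obtain rfl | hij := eq_or_ne i j
    · rw [Int.toNat_of_nonpos (by lia), pow_zero]
      exact isCoprime_one_right
    · exact (hcop hi hj hij).pow_right
  refine ⟨hne, fun n hn i hi ↦ le_antisymm (exponent_nonpos n hn i hi) ?_⟩
  simpa using exponent_nonpos (-n) (by simpa using hn) i hi

theorem multIndepOn_one_add_mul_of_transcendental {F : Type*} [Field F] [CharZero F] {z : F}
    (hz : Transcendental ℚ z) {E : Finset ℕ} (hE : 0 ∉ E) :
    MultIndepOn (fun s : ℕ ↦ 1 + (s : F) * z) E := by
  let p (s : ℕ) : Polynomial ℚ := 1 + Polynomial.C (s : ℚ) * Polynomial.X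
  have hdeg : ∀ s ∈ E, (p s).natDegree = 1 := fun s hs ↦ by
    have : (s : ℚ) ≠ 0 := mod_cast fun h ↦ hE (h ▸ hs)
    simp only [p]
    compute_degree!
    exact_mod_cast this
  have hcop : (E : Set ℕ).Pairwise fun s t ↦ IsCoprime (p s) (p t) := fun s _ t _ hst ↦ by
    have hst' : (t : ℚ) - s ≠ 0 := sub_ne_zero.2 (mod_cast hst.symm)
    set c : ℚ := (t - s : ℚ)⁻¹ with hc
    have hC : Polynomial.C ((t - s) * c) = 1 := by rw [hc, mul_inv_cancel₀ hst', map_one]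
    refine ⟨Polynomial.C (t * c), Polynomial.C (-s * c), ?_⟩
    simp only [p, map_mul, map_sub, map_neg] at hC ⊢
    linear_combination hC
  have := multIndepOn_map_of_pairwise_isCoprime
    (φ := (Polynomial.aeval z : Polynomial ℚ →ₐ[ℚ] F).toRingHom)
    (transcendental_iff_injective.1 hz) (p := p) (E := E)
    (fun s hs h ↦ by simpa [h] using hdeg s hs)
    (fun s hs h ↦ by simpa [Polynomial.natDegree_eq_zero_of_isUnit h] using hdeg s hs) hcop
  simpa [p, Function.comp_def] using this

/-! ### Packing in a finite-dimensional space -/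

section Packing

open Metric Module

variable {E : Type*} [NormedAddCommGroup E] [NormedSpace ℝ E] [FiniteDimensional ℝ E]

theorem card_le_of_isSeparated {S : Finset E} {c : E} {ε : ℝ≥0} (hε : ε ≠ 0)
    (hS : ∀ x ∈ S, dist x c ≤ 2 * ε) (hsep : IsSeparated ε (S : Set E)) :
    #S ≤ 5 ^ finrank ℝ E := by
  have hε' : (0 : ℝ) < ε := mod_cast hε.bot_lt
  let rescale : E ≃ E :=
    (Equiv.subRight c).trans (MulAction.toPerm (Units.mk0 (ε : ℝ)⁻¹ (by positivity)))
  have rescale_apply (x : E) : rescale x = (ε : ℝ)⁻¹ • (x - c) := rfl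
  have norm_rescale_le : ∀ x ∈ S, ‖rescale x‖ ≤ 2 := fun x hx ↦ by
    rw [rescale_apply, norm_smul, norm_inv, NNReal.norm_eq, ← dist_eq_norm,
      inv_mul_le_iff₀ hε', mul_comm]
    exact hS x hx
  have one_le_norm_sub : ∀ x ∈ S, ∀ y ∈ S, rescale x ≠ rescale y →
      1 ≤ ‖rescale x - rescale y‖ := fun x hx y hy hxy ↦ by
    rw [rescale_apply, rescale_apply, ← smul_sub, sub_sub_sub_cancel_right, norm_smul, norm_inv,
      NNReal.norm_eq, ← dist_eq_norm, le_inv_mul_iff₀ hε', mul_one]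
    have hlt : (ε : ENNReal) < edist x y := hsep hx hy (mt (congrArg rescale) hxy)
    rw [edist_nndist] at hlt
    exact_mod_cast hlt.le
  simpa using Besicovitch.card_le_of_separated (S.map rescale.toEmbedding)
    (forall_mem_map.2 norm_rescale_le)
    (forall_mem_map.2 fun x hx ↦ forall_mem_map.2 (one_le_norm_sub x hx))

theorem packingNumber_le_of_subset_closedBall {A : Set E} {c : E} {ε : ℝ≥0} (hε : ε ≠ 0)
    (hA : A ⊆ closedBall c (2 * ε)) : packingNumber ε A ≤ 5 ^ finrank ℝ E := by
  refine iSup₂_le fun C hC ↦ iSup_le fun hsep ↦ ?_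
  by_contra! hlt
  obtain ⟨S, hSC, hS⟩ := Set.exists_subset_encard_eq (Order.add_one_le_of_lt hlt)
  lift S to Finset E using Set.finite_of_encard_eq_coe (k := 5 ^ finrank ℝ E + 1) (mod_cast hS)
  have := card_le_of_isSeparated hε (fun x hx ↦ hA (hC (hSC hx))) (hsep.mono hSC)
  rw [Set.encard_coe_eq_coe_finsetCard] at hS
  norm_cast at hS
  lia

theorem exists_card_le_mul_card_filter_dist_le {ι : Type*} {A : Finset ι} (hA : A.Nonempty)
    {f : ι → E} {c : E} {ε : ℝ} (hε : 0 < ε) (hf : ∀ a ∈ A, dist (f a) c ≤ 2 * ε) :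
    ∃ a₀ ∈ A, #A ≤ 5 ^ finrank ℝ E * #{a ∈ A | dist (f a) (f a₀) ≤ ε} := by
  classical
  lift ε to ℝ≥0 using hε.le
  have hcover : coveringNumber ε (f '' A) ≤ (5 ^ finrank ℝ E : ℕ) :=
    (coveringNumber_le_packingNumber _ _).trans <| mod_cast
      packingNumber_le_of_subset_closedBall (c := c) (mod_cast hε.ne')
        (by simpa [Set.subset_def] using hf)
  obtain ⟨C, hCA, hCfin, hC, hcard⟩ := exists_set_encard_eq_coveringNumber
    (hcover.trans_lt (ENat.natCast_lt_top _)).ne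
  lift C to Finset E using hCfin
  rw [← hcard, Set.encard_coe_eq_coe_finsetCard, Nat.cast_le] at hcover
  let N (y : E) : Finset ι := {a ∈ A | dist (f a) y ≤ ε}
  have hAN : A ⊆ C.biUnion N := fun a ha ↦ by
    obtain ⟨y, hy, hay⟩ := hC (Set.mem_image_of_mem f ha)
    exact mem_biUnion.2 ⟨y, hy, mem_filter.2 ⟨ha, dist_le_coe.2 (edist_le_coe.1 hay)⟩⟩
  obtain ⟨y, hy, hmax⟩ := C.exists_max_image (fun y ↦ #(N y)) (by
    simpa using hC.nonempty (hA.to_set.image f))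
  obtain ⟨a₀, ha₀, rfl⟩ := hCA hy
  exact ⟨a₀, ha₀, (card_le_card hAN).trans <|
    (card_biUnion_le_card_mul _ _ _ hmax).trans (Nat.mul_le_mul_right _ hcover)⟩

theorem exists_card_le_pow_mul_card_filter_dist_le {ι : Type*} {A : Finset ι} (hA : A.Nonempty)
    {f : ι → E} {R : ℝ} (hR : 0 < R) (hf : ∀ a ∈ A, ∀ b ∈ A, dist (f a) (f b) ≤ R) (j : ℕ) :
    ∃ a₀ ∈ A, #A ≤ 5 ^ (finrank ℝ E * j) * #{a ∈ A | dist (f a) (f a₀) ≤ R / 2 ^ j} := by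
  induction j with
  | zero =>
    obtain ⟨a₀, ha₀⟩ := hA
    refine ⟨a₀, ha₀, ?_⟩
    rw [filter_true_of_mem fun a ha ↦ by simpa using hf a ha a₀ ha₀]
    simp
  | succ j ih =>
    obtain ⟨a₀, -, h₀⟩ := ih
    obtain ⟨a₁, ha₁, h₁⟩ := exists_card_le_mul_card_filter_dist_le (f := f) (c := f a₀)
      (card_pos.1 (Nat.pos_of_mul_pos_left (hA.card_pos.trans_le h₀)))
      (ε := R / 2 ^ (j + 1)) (by positivity)
      fun a ha ↦ (mem_filter.1 ha).2.trans_eq (by rw [pow_succ']; field_simp)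
    refine ⟨a₁, (mem_filter.1 ha₁).1, h₀.trans ?_⟩
    rw [mul_add_one, pow_add, mul_assoc]
    exact Nat.mul_le_mul_left _ (h₁.trans (by gcongr; exact filter_subset _ _))

theorem exists_linearIndepOn_forall_mem_span {ι G F V : Type*} [AddCommGroup G] [DivisionRing F]
    [CharZero F] [AddCommGroup V] [Module F V] (L : G →+ V) (u : ι → G) :
    ∃ S : Set ι, LinearIndepOn ℤ u S ∧
      ∀ i, L (u i) ∈ Submodule.span F ((fun i ↦ L (u i)) '' S) := by
  obtain ⟨S, hS, hmax⟩ := exists_maximal_linearIndepOn ℤ u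
  refine ⟨S, hS, fun i ↦ ?_⟩
  by_cases hi : i ∈ S
  · exact Submodule.subset_span (Set.mem_image_of_mem _ hi)
  obtain ⟨a, ha, hau⟩ := hmax i hi
  have hmem : L (a • u i) ∈ Submodule.span ℤ ((fun i ↦ L (u i)) '' S) := by
    have := Submodule.mem_map_of_mem (f := L.toIntLinearMap) hau
    rwa [Submodule.map_span, ← Set.image_comp] at this
  rw [map_zsmul, ← Int.cast_smul_eq_zsmul F] at hmem
  exact (Submodule.smul_mem_iff _ (Int.cast_ne_zero.2 ha)).1 (Submodule.span_subset_span ℤ F _ hmem)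

theorem exists_linearIndepOn_card_le_pow_mul {ι G V : Type*} [Fintype ι] [Nonempty ι]
    [AddCommGroup G] [NormedAddCommGroup V] [NormedSpace ℝ V] (L : G →+ V) (u : ι → G) {R : ℝ}
    (hR : 0 < R) (h : ∀ i i', ‖L (u i - u i')‖ ≤ R) (j : ℕ) :
    ∃ (S : Finset ι) (i₀ : ι), LinearIndepOn ℤ u S ∧
      Fintype.card ι ≤ 5 ^ (#S * j) * #{i | ‖L (u i - u i₀)‖ ≤ R / 2 ^ j} := by
  classical
  obtain ⟨S, hS, hspan⟩ := exists_linearIndepOn_forall_mem_span (F := ℝ) L u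
  lift S to Finset ι using S.toFinite
  let W := Submodule.span ℝ ((fun i ↦ L (u i)) '' S)
  have : FiniteDimensional ℝ W := FiniteDimensional.span_of_finite ℝ (S.finite_toSet.image _)
  have hrank : finrank ℝ W ≤ #S := by
    rw [show W = Submodule.span ℝ (S.image fun i ↦ L (u i)) by simp [W]]
    exact (finrank_span_finset_le_card _).trans card_image_le
  let f (i : ι) : W := ⟨L (u i), hspan i⟩
  have dist_eq (i i' : ι) : dist (f i) (f i') = ‖L (u i - u i')‖ := by
    rw [Subtype.dist_eq, dist_eq_norm, map_sub]
  obtain ⟨i₀, -, hi₀⟩ := exists_card_le_pow_mul_card_filter_dist_le (A := univ) univ_nonempty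
    (f := f) hR (by simpa only [dist_eq, mem_univ, true_imp_iff] using h) j
  simp only [dist_eq] at hi₀
  refine ⟨S, i₀, hS, hi₀.trans ?_⟩
  gcongr
  norm_num

end Packing

/-! ### The logarithmic embedding -/

section LogEmbedding

open AdmissibleAbsValues

variable {K : Type*} [Field K] [AdmissibleAbsValues K]

open scoped Classical in
/-- The index set of the absolute values entering the height on `K`. The archimedean absolute values
form a multiset, and each is repeated here according to its multiplicity. -/
abbrev AbsVal (K : Type*) [Field K] [AdmissibleAbsValues K] : Type _ :=
  (archAbsVal (K := K)).ToType ⊕ nonarchAbsVal (K := K)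

/-- The absolute value attached to an index. -/
def AbsVal.val : AbsVal K → AbsoluteValue K ℝ := Sum.elim (fun v ↦ v.1) (fun v ↦ v.1)

theorem hasSum_archAbsVal_nonarchAbsVal {f : AbsoluteValue K ℝ → ℝ}
    (hf : (fun v : nonarchAbsVal (K := K) ↦ f v.val).HasFiniteSupport) :
    HasSum (fun v : AbsVal K ↦ f v.val)
      ((archAbsVal.map f).sum + ∑ᶠ v : nonarchAbsVal (K := K), f v.val) := by
  classical
  refine HasSum.sum ?_ ?_
  · rw [show (archAbsVal.map f).sum = ∑ v : (archAbsVal (K := K)).ToType, f v.1 by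
      rw [← Multiset.map_univ_comp_coe]; rfl]
    exact hasSum_fintype _
  · exact (summable_of_hasFiniteSupport hf).hasSum_iff.2 (tsum_eq_finsum hf)

theorem posLog_add_posLog_inv (t : ℝ) : log⁺ t + log⁺ t⁻¹ = |log t| := by
  simp_rw [← half_mul_log_add_log_abs, log_inv, abs_neg]
  ring

theorem hasFiniteSupport_log {x : K} (hx : x ≠ 0) :
    (fun v : nonarchAbsVal (K := K) ↦ log (v.val x)).HasFiniteSupport :=
  (hasFiniteMulSupport hx).subset fun v hv h ↦ hv (by simp_all)

theorem hasSum_abs_log (x : Kˣ) :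
    HasSum (fun v : AbsVal K ↦ |log (v.val x)|) (2 * logHeight₁ (x : K)) := by
  have h := fun y : Kˣ ↦ hasSum_archAbsVal_nonarchAbsVal (f := fun v ↦ log⁺ (v (y : K)))
    ((hasFiniteSupport_log y.ne_zero).subset fun v hv h ↦ hv (by simp_all [posLog_apply]))
  simp_rw [← Height.logHeight₁_eq] at h
  convert (h x).add (h x⁻¹) using 1
  · simp [posLog_add_posLog_inv]
  · rw [Units.val_inv_eq_inv_val, logHeight₁_inv, two_mul]

/-- The logarithmic embedding of `Kˣ`, `x ↦ (log |x|ᵥ)ᵥ`. It takes values in the `ℓ¹` space over all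
absolute values, as in the product formula, so that its norm is twice the logarithmic height. -/
noncomputable def logEmbedding : Additive Kˣ →+ lp (fun _ : AbsVal K ↦ ℝ) 1 where
  toFun x := ⟨fun v ↦ log (v.val (x.toMul : K)),
    memℓp_gen (by simpa using (hasSum_abs_log x.toMul).summable)⟩
  map_zero' := by ext; simp
  map_add' x y := by
    ext v
    exact (congrArg log (map_mul v.val _ _)).trans <|
      log_mul (v.val.ne_zero x.toMul.ne_zero) (v.val.ne_zero y.toMul.ne_zero)

theorem norm_logEmbedding (x : Additive Kˣ) : ‖logEmbedding x‖ = 2 * logHeight₁ (x.toMul : K) := by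
  rw [lp.norm_eq_tsum_rpow (by simp)]
  simpa [logEmbedding] using (hasSum_abs_log x.toMul).tsum_eq

end LogEmbedding

/-! ### Heights -/

theorem ciSup_fin_two {α : Type*} [ConditionallyCompleteLattice α] (f : Fin 2 → α) :
    ⨆ i, f i = f 0 ⊔ f 1 := by
  have range_eq : Set.range f = {f 0, f 1} := by
    ext
    simp [eq_comm]
  rw [iSup, range_eq, csSup_pair]

section NumberField

variable {K : Type*} [Field K] [NumberField K]

theorem iSup_finitePlace_apply_intCast_eq_one (v : FinitePlace K) {a b : ℤ} (h : IsCoprime a b) :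
    ⨆ i, v (![(a : K), b] i) = 1 := by
  have hv : IsNonarchimedean (v : K → ℝ) := FinitePlace.add_le v
  have apply_le_one (n : ℤ) : v (n : K) ≤ 1 := hv.apply_intCast_le_one
  obtain ⟨c, d, hcd⟩ := h
  have hone : (c : K) * a + d * b = 1 := mod_cast hcd
  rw [ciSup_fin_two]
  refine le_antisymm (max_le (apply_le_one a) (apply_le_one b)) ?_
  calc (1 : ℝ) = v ((c : K) * a + d * b) := by rw [hone, map_one]
    _ ≤ max (v c * v a) (v d * v b) := by simpa using hv (c * a) (d * b)
    _ ≤ max (v a) (v b) := max_le_max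
        (mul_le_of_le_one_left (by positivity) (apply_le_one c))
        (mul_le_of_le_one_left (by positivity) (apply_le_one d))

theorem mulHeight₁_ratCast (q : ℚ) : mulHeight₁ (q : K) = mulHeight₁ q ^ totalWeight K := by
  have hne : ![(q.num : K), (q.den : ℤ)] ≠ 0 := fun h ↦ by simpa using congrFun h 1
  have apply_num_den (v : InfinitePlace K) :
      ⨆ i, v (![(q.num : K), (q.den : ℤ)] i) = (max q.num.natAbs q.den : ℕ) := by
    simp [ciSup_fin_two, Int.norm_eq_abs]
  rw [Rat.mulHeight₁_eq_max, q.cast_def, ← Int.cast_natCast, mulHeight₁_div_eq_mulHeight,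
    NumberField.mulHeight_eq hne]
  simp only [apply_num_den, iSup_finitePlace_apply_intCast_eq_one _ q.isCoprime_num_den,
    finprod_one, mul_one, totalWeight_eq_sum_mult, prod_pow_eq_pow_sum]

theorem logHeight₁_ratCast (q : ℚ) : logHeight₁ (q : K) = totalWeight K * logHeight₁ q := by
  simp only [logHeight₁_eq_log_mulHeight₁, mulHeight₁_ratCast, log_pow]

theorem card_le_of_mulHeight₁_le {S : Finset ℚ} {N : ℕ} (hS : ∀ q ∈ S, mulHeight₁ q ≤ N) :
    #S ≤ (2 * N + 1) * N := by
  have hmem : ∀ q ∈ S, (q.num, q.den) ∈ Icc (-N : ℤ) N ×ˢ Icc 1 N := fun q hq ↦ by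
    have hle := hS q hq
    rw [Rat.mulHeight₁_eq_max, Nat.cast_le, max_le_iff] at hle
    have hpos := q.den_pos
    simp only [mem_product, mem_Icc]
    lia
  calc #S ≤ #(Icc (-N : ℤ) N ×ˢ Icc 1 N) := card_le_card_of_injOn _ hmem
        fun q _ q' _ h ↦ Rat.ext (congrArg Prod.fst h) (congrArg Prod.snd h)
    _ = (2 * N + 1) * N := by
        rw [card_product, Int.card_Icc, Nat.card_Icc]
        congr 1
        lia

theorem card_le_of_logHeight₁_le {S : Finset ℚ} {B : ℝ} (hS : ∀ q ∈ S, logHeight₁ q ≤ B) :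
    (#S : ℝ) ≤ 3 * exp (2 * B) := by
  set N := ⌊exp B⌋₊
  have hcard : #S ≤ (2 * N + 1) * N := card_le_of_mulHeight₁_le fun q hq ↦ by
    have hexp := (log_le_iff_le_exp (mulHeight₁_pos q)).1 (hS q hq)
    rw [Rat.mulHeight₁_eq_max] at hexp ⊢
    exact Nat.cast_le.2 (Nat.le_floor hexp)
  calc (#S : ℝ) ≤ (2 * N + 1) * N := mod_cast hcard
    _ ≤ 3 * (N : ℝ) ^ 2 := by exact_mod_cast show (2 * N + 1) * N ≤ 3 * N ^ 2 by nlinarith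
    _ ≤ 3 * exp B ^ 2 := by gcongr; exact Nat.floor_le (exp_nonneg B)
    _ = 3 * exp (2 * B) := by rw [← exp_nat_mul, Nat.cast_ofNat]

end NumberField

/-! ### Heights in the progression -/

theorem log_two_le_log_div_sixteen {r : ℕ} (hr : 2 ^ 16 ≤ r) : log 2 ≤ log r / 16 := by
  rw [le_div_iff₀' (by norm_num), ← Nat.cast_ofNat, ← log_pow]
  exact log_le_log (by norm_num) (mod_cast hr)

theorem log_natCast_le_log_natCast {s r : ℕ} (h : s ≤ r) : log s ≤ log r := by
  obtain rfl | hs := s.eq_zero_or_pos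
  · simpa using log_natCast_nonneg r
  · gcongr

section AdmissibleAbsValues

variable {K : Type*} [Field K] [AdmissibleAbsValues K]

theorem logHeight₁_natCast_le (n : ℕ) : logHeight₁ (n : K) ≤ totalWeight K * log n := by
  simpa using logHeight₁_sum_le (Finset.range n) fun _ ↦ (1 : K)

theorem logHeight₁_div_le (x y : K) : logHeight₁ (x / y) ≤ logHeight₁ x + logHeight₁ y := by
  simpa only [div_eq_mul_inv, logHeight₁_inv] using logHeight₁_mul_le x y⁻¹

theorem logHeight₁_one_add_natCast_mul_le (z : K) (s : ℕ) :
    logHeight₁ (1 + s * z) ≤ logHeight₁ z + totalWeight K * (log 2 + log s) := by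
  have h₁ := logHeight₁_add_le 1 (s * z)
  have h₂ := logHeight₁_mul_le (s : K) z
  have h₃ := logHeight₁_natCast_le (K := K) s
  rw [logHeight₁_one] at h₁
  linarith

theorem logHeight₁_le_of_div {z : K} {s t : ℕ} (hst : (s : K) ≠ t) (ht : 1 + t * z ≠ 0) :
    logHeight₁ z ≤ 2 * logHeight₁ ((1 + s * z) / (1 + t * z)) +
      totalWeight K * (2 * log 2 + log s + log t) := by
  set w := (1 + s * z) / (1 + t * z) with hw
  have hz : z = (w - 1) / (s - t * w) := by
    have : (s : K) - t ≠ 0 := sub_ne_zero.2 hst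
    have hnum : w - 1 = (s - t) * z / (1 + t * z) := by rw [hw, div_sub_one ht]; ring
    have hden : s - t * w = (s - t) / (1 + t * z) := by rw [hw]; field_simp; ring
    rw [hnum, hden, div_div_div_cancel_right₀ ht, mul_div_cancel_left₀ _ this]
  have h₁ := logHeight₁_sub_le w 1
  have h₂ := logHeight₁_sub_le (s : K) (t * w)
  have h₃ := logHeight₁_mul_le (t : K) w
  have h₄ := logHeight₁_natCast_le (K := K) s
  have h₅ := logHeight₁_natCast_le (K := K) t
  have h₆ := logHeight₁_div_le (w - 1) (s - t * w)
  rw [logHeight₁_one] at h₁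
  rw [← hz] at h₆
  linarith

theorem logHeight₁_div_le_of_le_logHeight₁_add [CharZero K] {z : K} {r s t : ℕ} (hr : 2 ^ 16 ≤ r)
    (hs : s ≤ r) (ht : t ≤ r) (htz : 1 + t * z ≠ 0)
    (h : logHeight₁ ((1 + s * z) / (1 + t * z)) ≤
      (2 * logHeight₁ z + 4 * (totalWeight K * log r)) / 2 ^ 7) :
    logHeight₁ ((1 + s * z) / (1 + t * z)) ≤ totalWeight K * (log r / 12) := by
  have := log_natCast_nonneg r
  obtain rfl | hst := eq_or_ne s t
  · rw [div_self htz, logHeight₁_one]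
    positivity
  have hz := logHeight₁_le_of_div (Nat.cast_injective.ne hst) htz
  have hle : totalWeight K * (2 * log 2 + log s + log t) ≤ totalWeight K * (17 / 8 * log r) := by
    gcongr
    linarith [log_two_le_log_div_sixteen hr, log_natCast_le_log_natCast hs,
      log_natCast_le_log_natCast ht]
  have hD : 0 ≤ totalWeight K * log r := by positivity
  linarith

theorem logHeight₁_sub_div_sub_le {z : K} (hz : z ≠ 0) (s m : K) {t : K} (ht : 1 + t * z ≠ 0) :
    logHeight₁ ((s - t) / (m - t)) ≤ logHeight₁ ((1 + s * z) / (1 + t * z)) +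
      logHeight₁ ((1 + m * z) / (1 + t * z)) + totalWeight K * (2 * log 2) := by
  have sub_one_eq (x : K) : (1 + x * z) / (1 + t * z) - 1 = (x - t) * (z / (1 + t * z)) := by
    rw [div_sub_one ht]
    ring
  have hle (x : K) : logHeight₁ ((x - t) * (z / (1 + t * z))) ≤
      logHeight₁ ((1 + x * z) / (1 + t * z)) + totalWeight K * log 2 := by
    have := logHeight₁_sub_le ((1 + x * z) / (1 + t * z)) 1
    rw [logHeight₁_one, sub_one_eq] at this
    linarith
  calc logHeight₁ ((s - t) / (m - t))
      = logHeight₁ ((s - t) * (z / (1 + t * z)) / ((m - t) * (z / (1 + t * z)))) := by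
        rw [mul_div_mul_right _ _ (div_ne_zero hz ht)]
    _ ≤ _ := logHeight₁_div_le _ _
    _ ≤ _ := by linarith [hle s, hle m]

theorem exists_multIndepOn_card_le_pow_mul {ι : Type*} {A : Finset ι} (hA : A.Nonempty)
    {a : ι → K} (ha : ∀ i ∈ A, a i ≠ 0) {R : ℝ} (hR : 0 < R)
    (h : ∀ i ∈ A, ∀ i' ∈ A, logHeight₁ (a i / a i') ≤ R) (j : ℕ) :
    ∃ S ⊆ A, ∃ i₀ ∈ A, MultIndepOn a S ∧
      #A ≤ 5 ^ (#S * j) * #{i ∈ A | logHeight₁ (a i / a i₀) ≤ R / 2 ^ j} := by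
  have := hA.to_subtype
  let u (i : A) : Kˣ := Units.mk0 (a i) (ha i i.2)
  have norm_eq (i i' : A) : ‖logEmbedding (Additive.ofMul (u i) - Additive.ofMul (u i'))‖ =
      2 * logHeight₁ (a i / a i') := by
    rw [norm_logEmbedding]
    simp [u]
  obtain ⟨S, i₀, hS, hcard⟩ := exists_linearIndepOn_card_le_pow_mul logEmbedding
    (fun i ↦ Additive.ofMul (u i)) (mul_pos two_pos hR)
    (fun i i' ↦ by rw [norm_eq]; gcongr; exact h i i.2 i' i'.2) j
  refine ⟨S.map (Function.Embedding.subtype _), map_subtype_subset S, i₀, i₀.2,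
    (multIndepOn_units_iff_linearIndepOn.2 hS).of_comp_embedding, ?_⟩
  simp only [norm_eq, mul_div_assoc, mul_le_mul_iff_right₀ two_pos] at hcard
  rwa [univ_eq_attach, filter_attach (fun i ↦ logHeight₁ (a i / a i₀) ≤ R / 2 ^ j), card_map,
    card_attach, Fintype.card_coe, ← card_map (Function.Embedding.subtype _)] at hcard

end AdmissibleAbsValues

section NumberField

variable {K : Type*} [Field K] [NumberField K]

theorem card_le_of_logHeight₁_div_le {z : K} (hz : z ≠ 0) {t : ℕ} (ht : 1 + t * z ≠ 0)
    {A : Finset ℕ} {β : ℝ} (hβ : 0 ≤ β)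
    (hA : ∀ s ∈ A, logHeight₁ ((1 + s * z) / (1 + t * z)) ≤ totalWeight K * β) :
    (#A : ℝ) ≤ 48 * exp (4 * β) := by
  by_cases hAt : A ⊆ {t}
  · have hone : (#A : ℝ) ≤ 1 := mod_cast card_le_card hAt
    linarith [one_le_exp (mul_nonneg zero_le_four hβ)]
  obtain ⟨m, hmA, hmt⟩ := not_subset.1 hAt
  let q (s : ℕ) : ℚ := (s - t) / (m - t)
  have q_injective : q.Injective := fun s s' h ↦ by
    have : (m : ℚ) - t ≠ 0 := sub_ne_zero.2 (mod_cast mt mem_singleton.2 hmt)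
    simpa [q, div_left_inj' this] using h
  have logHeight₁_q_le : ∀ s ∈ A, logHeight₁ (q s) ≤ 2 * log 2 + 2 * β := fun s hs ↦ by
    have hd : (0 : ℝ) < totalWeight K := mod_cast totalWeight_pos (K := K)
    refine le_of_mul_le_mul_left ?_ hd
    have h := logHeight₁_sub_div_sub_le hz s m ht
    rw [← logHeight₁_ratCast]
    push_cast [q]
    linarith [hA s hs, hA m hmA]
  calc (#A : ℝ) = #(A.image q) := by rw [card_image_of_injective A q_injective]
    _ ≤ 3 * exp (2 * (2 * log 2 + 2 * β)) :=
        card_le_of_logHeight₁_le (forall_mem_image.2 logHeight₁_q_le)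
    _ = 3 * (exp (log 2) ^ 4 * exp (4 * β)) := by rw [← exp_nat_mul, ← exp_add]; ring_nf
    _ = 48 * exp (4 * β) := by rw [exp_log two_pos]; ring

end NumberField

/-! ### Independent members of the progression -/

theorem card_le_card_filter_one_add_natCast_mul_ne_zero_add_one {F : Type*} [Field F] [CharZero F]
    [DecidableEq F] (A : Finset ℕ) (z : F) :
    #A ≤ #({s ∈ A | 1 + (s : F) * z ≠ 0} : Finset ℕ) + 1 := by
  have hone : #({s ∈ A | 1 + (s : F) * z = 0} : Finset ℕ) ≤ 1 := card_le_one.2 fun s hs t ht ↦ by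
    have hst := (mem_filter.1 hs).2.trans (mem_filter.1 ht).2.symm
    have hz : z ≠ 0 := fun h ↦ by simp [h] at hs
    simpa [hz] using hst
  have := card_filter_add_card_filter_not (s := A) fun s : ℕ ↦ 1 + (s : F) * z = 0
  lia

theorem log_div_sixty_lt {r k : ℕ} (hr : 2 ^ 16 ≤ r)
    (h : (r / 2 : ℝ) ≤ 5 ^ (k * 7) * (48 * exp (4 * (log r / 12)))) : log r / 60 < k := by
  have hr0 : (0 : ℝ) < r := mod_cast (by lia : 0 < r)
  have hlog := log_le_log (by positivity) h
  rw [log_div hr0.ne' two_ne_zero, log_mul (by positivity) (by positivity),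
    log_mul (by norm_num) (by positivity), log_exp, log_pow] at hlog
  have log_48_le : log 48 ≤ 6 * log 2 := by
    rw [← Nat.cast_ofNat (n := 6), ← log_pow]
    gcongr
    norm_num
  have log_5_le : 7 * log 5 ≤ 17 * log 2 := by
    rw [← Nat.cast_ofNat (n := 7), ← Nat.cast_ofNat (n := 17), ← log_pow, ← log_pow]
    gcongr
    norm_num
  have hk : (k : ℝ) * (7 * log 5) ≤ k * 12 := by
    gcongr
    linarith [log_two_lt_d9]
  have hpos : 0 < log r := log_pos (by norm_cast; lia)
  push_cast at hlog
  linarith [log_two_le_log_div_sixteen hr]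

theorem exists_multIndepOn_one_add_natCast_mul_of_numberField {K : Type*} [Field K]
    [NumberField K] {z : K} (hz : z ≠ 0) {r : ℕ} (hr : 2 ^ 16 ≤ r) :
    ∃ E ⊆ Icc 1 r, log r / 60 < #E ∧ MultIndepOn (fun s : ℕ ↦ 1 + (s : K) * z) E := by
  classical
  let A : Finset ℕ := {s ∈ Icc 1 r | 1 + (s : K) * z ≠ 0}
  have hA : r ≤ #A + 1 := by
    simpa using card_le_card_filter_one_add_natCast_mul_ne_zero_add_one (Icc 1 r) z
  have le_of_mem : ∀ s ∈ A, s ≤ r := fun s hs ↦ (mem_Icc.1 (mem_filter.1 hs).1).2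
  have ne_zero : ∀ s ∈ A, 1 + (s : K) * z ≠ 0 := fun s hs ↦ (mem_filter.1 hs).2
  have logHeight₁_le : ∀ s ∈ A, logHeight₁ (1 + (s : K) * z) ≤
      logHeight₁ z + 2 * (totalWeight K * log r) := fun s hs ↦ by
    have h := logHeight₁_one_add_natCast_mul_le z s
    have : totalWeight K * (log 2 + log s) ≤ totalWeight K * (2 * log r) := by
      gcongr
      linarith [log_two_le_log_div_sixteen hr, log_natCast_le_log_natCast (le_of_mem s hs),
        log_natCast_nonneg r]
    linarith
  have hlog : 0 < log r := log_pos (by norm_cast; lia)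
  have : (0 : ℝ) < totalWeight K := mod_cast totalWeight_pos (K := K)
  obtain ⟨E, hEA, t, ht, hE, hcard⟩ := exists_multIndepOn_card_le_pow_mul
    (a := fun s : ℕ ↦ 1 + (s : K) * z) (R := 2 * logHeight₁ z + 4 * (totalWeight K * log r))
    (card_pos.1 (by lia)) ne_zero (by positivity) (fun s hs t ht ↦
      (logHeight₁_div_le _ _).trans (by linarith [logHeight₁_le s hs, logHeight₁_le t ht])) 7
  refine ⟨E, hEA.trans (filter_subset _ _), log_div_sixty_lt hr ?_, hE⟩
  have hfibre : (#{s ∈ A | _} : ℝ) ≤ _ := card_le_of_logHeight₁_div_le hz (ne_zero t ht)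
    (β := log r / 12) (by positivity) fun s hs ↦ logHeight₁_div_le_of_le_logHeight₁_add hr
      (le_of_mem s (mem_filter.1 hs).1) (le_of_mem t ht) (ne_zero t ht) (mem_filter.1 hs).2
  calc (r / 2 : ℝ) ≤ #A := by rw [div_le_iff₀ two_pos]; norm_cast; lia
    _ ≤ (5 ^ (#E * 7) * #{s ∈ A | _} : ℕ) := Nat.cast_le.2 hcard
    _ ≤ 5 ^ (#E * 7) * (48 * exp (4 * (log r / 12))) := by push_cast; gcongr

theorem multiplicatively_independent_subset_of_progression_general {F : Type*} [Field F]
    [CharZero F] {z : F} (hz : z ≠ 0) {r : ℕ} (hr : 2 ^ 16 ≤ r) :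
    ∃ E ⊆ Icc 1 r, log r / 60 < #E ∧ MultIndepOn (fun s : ℕ ↦ 1 + (s : F) * z) E := by
  by_cases hz' : IsAlgebraic ℚ z
  · have := IntermediateField.adjoin.finiteDimensional hz'.isIntegral
    have : NumberField (IntermediateField.adjoin ℚ {z}) := {}
    obtain ⟨E, hEr, hcard, hE⟩ := exists_multIndepOn_one_add_natCast_mul_of_numberField
      (z := IntermediateField.AdjoinSimple.gen ℚ z) (by simpa [← Subtype.coe_inj] using hz) hr
    exact ⟨E, hEr, hcard, hE.map (algebraMap (IntermediateField.adjoin ℚ {z}) F).injective⟩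
  · refine ⟨Icc 1 r, subset_rfl, ?_, multIndepOn_one_add_mul_of_transcendental hz' (by simp)⟩
    have := log_le_self (Nat.cast_nonneg (α := ℝ) r)
    have : (0 : ℝ) < r := mod_cast (by lia : 0 < r)
    rw [Nat.card_Icc, Nat.add_sub_cancel]
    linarith

end

/-- Lemma 3.2: There is an absolute constant `c > 0` such that for every sufficiently large
`r` and every `z ∈ ℂ^*`, the set `{1 + s·z : 1 ≤ s ≤ r}` contains a multiplicatively
independent subset `{1 + s·z : s ∈ E}` with `|E| > c·log r`. -/
theorem multiplicatively_independent_subset_of_progression :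
    ∃ c : ℝ, 0 < c ∧ ∃ r₀ : ℕ, ∀ r : ℕ, r ≥ r₀ → ∀ z : ℂ, z ≠ 0 →
      ∃ E : Finset ℕ, E ⊆ Finset.Icc 1 r ∧
        (E.card : ℝ) > c * Real.log r ∧
        (∀ s ∈ E, 1 + (s : ℂ) * z ≠ 0) ∧
        (∀ n : ℕ → ℤ, (∏ s ∈ E, (1 + (s : ℂ) * z) ^ (n s)) = 1 → ∀ s ∈ E, n s = 0) := by
  refine ⟨1 / 60, by norm_num, 2 ^ 16, fun r hr z hz ↦ ?_⟩
  obtain ⟨E, hEr, hcard, hE⟩ := multiplicatively_independent_subset_of_progression_general hz hr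
  exact ⟨E, hEr, by linarith, hE⟩
end
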